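/- arXiv:0905.1236 — 3 statements merged into one kernel-verified Lean document; each statement's English description precedes it below -/
import Mathlib

section
/- The Coulomb interaction between two 1s clouds with different exponents satisfies (11|33)-type formula: ∫∫ φ_{1s}(x)² φ_{2p₃}(y)² / |x−y| dx dy = Z₁Z₃(8Z₁⁴ + 20Z₁³Z₃ + 20Z₁²Z₃² + 10Z₁Z₃³ + Z₃⁴) / (2Z₁+Z₃)⁵. -/
open MeasureTheory Real

/-- Integration of a radial function on the plane. -/
lemma lintegral_plane_radial {g : ℝ → ENNReal} (hg : Measurable g) :
    ∫⁻ p : ℝ × ℝ, g (p.1 ^ 2 + p.2 ^ 2) =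
      ∫⁻ ρ in Set.Ioi 0, ENNReal.ofReal (2 * π * ρ) * g (ρ ^ 2) := by
  rw [← lintegral_comp_polarCoord_symm, polarCoord_target, Measure.volume_eq_prod,
    setLIntegral_prod]
  · refine setLIntegral_congr_fun measurableSet_Ioi fun ρ hρ => ?_
    have h : ∀ θ : ℝ, (ρ * cos θ) ^ 2 + (ρ * sin θ) ^ 2 = ρ ^ 2 := fun θ => by
      linear_combination ρ ^ 2 * sin_sq_add_cos_sq θ
    simp only [polarCoord_symm_apply, h, smul_eq_mul, lintegral_const, Measure.restrict_apply_univ,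
      Real.volume_Ioo]
    rw [mul_right_comm, ← ENNReal.ofReal_mul (le_of_lt hρ)]
    congr 2
    ring
  · have := continuous_polarCoord_symm.measurable
    simp only [smul_eq_mul]
    exact Measurable.aemeasurable (by fun_prop)

/-- Polar coordinates in the half plane `{(z, ρ) | 0 < ρ}`. -/
lemma lintegral_halfPlane_polar {h : ℝ × ℝ → ENNReal} (hh : Measurable h) :
    ∫⁻ z, ∫⁻ ρ in Set.Ioi 0, h (z, ρ) =
      ∫⁻ r in Set.Ioi 0, ∫⁻ θ in Set.Ioo 0 π,
        ENNReal.ofReal r * h (r * cos θ, r * sin θ) := by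
  have hS : MeasurableSet {p : ℝ × ℝ | 0 < p.2} := measurableSet_lt measurable_const measurable_snd
  have hh' := hh.indicator hS
  have h1 : ∫⁻ z, ∫⁻ ρ in Set.Ioi 0, h (z, ρ) =
      ∫⁻ p : ℝ × ℝ, {p : ℝ × ℝ | 0 < p.2}.indicator h p := by
    rw [Measure.volume_eq_prod, lintegral_prod _ hh'.aemeasurable]
    refine lintegral_congr fun z => ?_
    rw [← lintegral_indicator measurableSet_Ioi]
    rfl
  rw [h1, ← lintegral_comp_polarCoord_symm, polarCoord_target, Measure.volume_eq_prod,
    setLIntegral_prod]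
  · refine setLIntegral_congr_fun measurableSet_Ioi fun r hr => ?_
    have hr : 0 < r := hr
    simp only [polarCoord_symm_apply, smul_eq_mul]
    rw [← lintegral_indicator measurableSet_Ioo, ← lintegral_indicator measurableSet_Ioo]
    refine lintegral_congr fun θ => ?_
    by_cases hθ : θ ∈ Set.Ioo 0 π
    · have hθ' : θ ∈ Set.Ioo (-π) π := ⟨by linarith [hθ.1, pi_pos], hθ.2⟩
      have hs : 0 < r * sin θ := mul_pos hr (sin_pos_of_mem_Ioo hθ)
      simp [hθ, hθ', hs, Set.indicator]
    · by_cases hθ' : θ ∈ Set.Ioo (-π) π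
      · have hθ0 : θ ≤ 0 := by
          by_contra! hc
          exact hθ ⟨hc, hθ'.2⟩
        have hs : ¬ 0 < r * sin θ := not_lt.2 (mul_nonpos_of_nonneg_of_nonpos hr.le
          (sin_nonpos_of_nonpos_of_neg_pi_le hθ0 hθ'.1.le))
        simp [hθ, hs, Set.indicator]
      · rw [Set.indicator_of_notMem hθ, Set.indicator_of_notMem hθ']
  · have := continuous_polarCoord_symm.measurable
    simp only [smul_eq_mul]
    exact Measurable.aemeasurable (by fun_prop)

/-- Cylindrical coordinates with axis `i` for functions of `x i` and `‖x‖`. -/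
lemma lintegral_cylindrical {F : ℝ × ℝ → ENNReal} (hF : Measurable F) (i : Fin 3) :
    ∫⁻ x : EuclideanSpace ℝ (Fin 3), F (x i, ‖x‖) =
      ∫⁻ z, ∫⁻ p : ℝ × ℝ, F (z, √(z ^ 2 + (p.1 ^ 2 + p.2 ^ 2))) := by
  have h1 : ∫⁻ x : EuclideanSpace ℝ (Fin 3), F (x i, ‖x‖) =
      ∫⁻ x : Fin 3 → ℝ, F (x i, √(∑ j, x j ^ 2)) := by
    rw [← (PiLp.volume_preserving_ofLp (Fin 3)).lintegral_comp (by fun_prop)]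
    simp only [EuclideanSpace.norm_eq, norm_eq_abs, sq_abs]
  rw [h1, ← ((volume_preserving_piFinSuccAbove (fun _ : Fin 3 => ℝ) i).symm).lintegral_comp
    (by fun_prop), Measure.volume_eq_prod, lintegral_prod _ (Measurable.aemeasurable (by fun_prop))]
  refine lintegral_congr fun z => ?_
  rw [← (volume_preserving_finTwoArrow ℝ).lintegral_comp (by fun_prop)]
  refine lintegral_congr fun p => ?_
  have e : (MeasurableEquiv.piFinSuccAbove (fun _ : Fin 3 => ℝ) i).symm (z, p) =
      i.insertNth z p := rfl
  simp [e, Fin.sum_univ_succAbove _ i, MeasurableEquiv.finTwoArrow]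

/-- Spherical coordinates with polar axis `i` for functions of `x i` and `‖x‖`. -/
lemma lintegral_spherical {F : ℝ × ℝ → ENNReal} (hF : Measurable F) (i : Fin 3) :
    ∫⁻ x : EuclideanSpace ℝ (Fin 3), F (x i, ‖x‖) =
      ∫⁻ r in Set.Ioi 0, ∫⁻ θ in Set.Ioo 0 π,
        ENNReal.ofReal (2 * π * r ^ 2 * sin θ) * F (r * cos θ, r) := by
  rw [lintegral_cylindrical hF]
  have h1 : ∀ z : ℝ, ∫⁻ p : ℝ × ℝ, F (z, √(z ^ 2 + (p.1 ^ 2 + p.2 ^ 2))) =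
      ∫⁻ ρ in Set.Ioi 0, ENNReal.ofReal (2 * π * ρ) * F (z, √(z ^ 2 + ρ ^ 2)) := fun z =>
    lintegral_plane_radial (g := fun t => F (z, √(z ^ 2 + t))) (by fun_prop)
  simp_rw [h1]
  rw [lintegral_halfPlane_polar
    (h := fun q => ENNReal.ofReal (2 * π * q.2) * F (q.1, √(q.1 ^ 2 + q.2 ^ 2))) (by fun_prop)]
  refine setLIntegral_congr_fun measurableSet_Ioi fun r hr => ?_
  have hr : 0 < r := hr
  refine setLIntegral_congr_fun measurableSet_Ioo fun θ hθ => ?_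
  have h : (r * cos θ) ^ 2 + (r * sin θ) ^ 2 = r ^ 2 := by
    linear_combination r ^ 2 * sin_sq_add_cos_sq θ
  simp only [h, sqrt_sq hr.le]
  rw [← mul_assoc, ← ENNReal.ofReal_mul hr.le]
  congr 2
  ring

/-- The angular integral in Newton's shell theorem. -/
lemma lintegral_angular_coulomb {r d : ℝ} (hr : 0 < r) (hd : 0 < d) (hrd : r ≠ d) :
    ∫⁻ θ in Set.Ioo 0 π, ENNReal.ofReal (sin θ / √(r ^ 2 + d ^ 2 - 2 * r * d * cos θ)) =
      ENNReal.ofReal (2 / max r d) := by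
  have hpos : ∀ θ : ℝ, 0 < r ^ 2 + d ^ 2 - 2 * r * d * cos θ := fun θ => by
    have h1 := mul_le_mul_of_nonneg_left (cos_le_one θ) (mul_pos hr hd).le
    have h2 := sq_pos_of_ne_zero (sub_ne_zero.2 hrd)
    nlinarith
  have hcont : Continuous fun θ : ℝ => sin θ / √(r ^ 2 + d ^ 2 - 2 * r * d * cos θ) :=
    Continuous.div (by fun_prop) (by fun_prop) fun θ => (sqrt_pos.2 (hpos θ)).ne'
  have hderiv : ∀ θ : ℝ, HasDerivAt (fun θ => √(r ^ 2 + d ^ 2 - 2 * r * d * cos θ) / (r * d))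
      (sin θ / √(r ^ 2 + d ^ 2 - 2 * r * d * cos θ)) θ := fun θ => by
    have h := ((((hasDerivAt_cos θ).const_mul (2 * r * d)).const_sub
      (r ^ 2 + d ^ 2)).sqrt (hpos θ).ne').div_const (r * d)
    refine h.congr_deriv ?_
    have := (sqrt_pos.2 (hpos θ)).ne'
    generalize √(r ^ 2 + d ^ 2 - 2 * r * d * cos θ) = t at this ⊢
    field_simp
  have hFTC := intervalIntegral.integral_eq_sub_of_hasDerivAt (a := 0) (b := π)
    (fun θ _ => hderiv θ) (hcont.intervalIntegrable _ _)
  rw [intervalIntegral.integral_of_le pi_pos.le] at hFTC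
  rw [restrict_Ioo_eq_restrict_Ioc, ← ofReal_integral_eq_lintegral_ofReal, hFTC]
  · congr 1
    have e1 : r ^ 2 + d ^ 2 - 2 * r * d * cos π = (r + d) ^ 2 := by rw [cos_pi]; ring
    have e2 : r ^ 2 + d ^ 2 - 2 * r * d * cos 0 = (r - d) ^ 2 := by rw [cos_zero]; ring
    rw [e1, e2, sqrt_sq (by positivity), sqrt_sq_eq_abs]
    rcases le_total r d with h | h
    · rw [max_eq_right h, abs_of_nonpos (by linarith)]
      field_simp
      ring
    · rw [max_eq_left h, abs_of_nonneg (by linarith)]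
      field_simp
      ring
  · exact (hcont.integrableOn_Icc).mono_set Set.Ioc_subset_Icc_self
  · refine (ae_restrict_iff' measurableSet_Ioc).2 (ae_of_all _ fun θ hθ => ?_)
    exact div_nonneg (sin_nonneg_of_nonneg_of_le_pi hθ.1.le hθ.2) (sqrt_nonneg _)

/-- Newton's shell theorem for the Coulomb potential of a radial density. -/
lemma lintegral_radial_coulomb {g : ℝ → ENNReal} (hg : Measurable g)
    {y : EuclideanSpace ℝ (Fin 3)} (hy : y ≠ 0) :
    ∫⁻ x, g ‖x‖ * ENNReal.ofReal (1 / ‖x - y‖) =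
      ∫⁻ r in Set.Ioi 0, ENNReal.ofReal (4 * π * r ^ 2 / max r ‖y‖) * g r := by
  have hd : 0 < ‖y‖ := norm_pos_iff.2 hy
  set w : EuclideanSpace ℝ (Fin 3) := EuclideanSpace.single 0 ‖y‖ with hw
  have hwy : ‖w‖ = ‖y‖ := by simp [hw]
  have hrot : ∫⁻ x, g ‖x‖ * ENNReal.ofReal (1 / ‖x - y‖) =
      ∫⁻ x, g ‖x‖ * ENNReal.ofReal (1 / ‖x - w‖) := by
    let R := (ℝ ∙ (w - y))ᗮ.reflection
    rw [← R.measurePreserving.lintegral_comp (by fun_prop)]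
    refine lintegral_congr fun x => ?_
    have hR : R w = y := Submodule.reflection_sub hwy
    rw [← hR, ← map_sub, R.norm_map, R.norm_map]
  have hnorm : ∀ x : EuclideanSpace ℝ (Fin 3),
      ‖x - w‖ = √(‖x‖ ^ 2 + ‖y‖ ^ 2 - 2 * ‖y‖ * x 0) := fun x => by
    rw [← sqrt_sq (norm_nonneg (x - w)), norm_sub_sq_real, hwy, hw,
      EuclideanSpace.inner_single_right]
    congr 1
    simp
    ring
  simp_rw [hrot, hnorm]
  rw [lintegral_spherical
    (F := fun q => g q.2 * ENNReal.ofReal (1 / √(q.2 ^ 2 + ‖y‖ ^ 2 - 2 * ‖y‖ * q.1)))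
    (by fun_prop) 0]
  refine lintegral_congr_ae ?_
  filter_upwards [ae_restrict_mem measurableSet_Ioi,
    ae_restrict_of_ae (Measure.ae_ne volume ‖y‖)] with r hr hrd
  have hr : 0 < r := hr
  have h1 : ∀ θ ∈ Set.Ioo 0 π, ENNReal.ofReal (2 * π * r ^ 2 * sin θ) *
      (g r * ENNReal.ofReal (1 / √(r ^ 2 + ‖y‖ ^ 2 - 2 * ‖y‖ * (r * cos θ)))) =
      ENNReal.ofReal (2 * π * r ^ 2) * g r *
        ENNReal.ofReal (sin θ / √(r ^ 2 + ‖y‖ ^ 2 - 2 * r * ‖y‖ * cos θ)) := fun θ hθ => by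
    rw [ENNReal.ofReal_mul (by positivity), div_eq_mul_one_div (sin θ),
      ENNReal.ofReal_mul (sin_pos_of_mem_Ioo hθ).le,
      show 2 * ‖y‖ * (r * cos θ) = 2 * r * ‖y‖ * cos θ by ring]
    ring
  rw [setLIntegral_congr_fun measurableSet_Ioo h1, lintegral_const_mul _ (by fun_prop),
    lintegral_angular_coulomb hr hd hrd, mul_right_comm, ← ENNReal.ofReal_mul (by positivity)]
  congr 2
  ring

lemma integrableOn_pow_mul_exp_neg (n : ℕ) {c : ℝ} (hc : 0 < c) :
    IntegrableOn (fun r : ℝ => r ^ n * exp (-(c * r))) (Set.Ioi 0) := by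
  have h := integrableOn_rpow_mul_exp_neg_mul_rpow (p := 1) (s := n) (b := c)
    (by have := n.cast_nonneg (α := ℝ); linarith) one_pos hc
  simpa using h

lemma integral_pow_mul_exp_neg (n : ℕ) {c : ℝ} (hc : 0 < c) :
    ∫ r in Set.Ioi 0, r ^ n * exp (-(c * r)) = n.factorial / c ^ (n + 1) := by
  have h := integral_rpow_mul_exp_neg_mul_Ioi (a := n + 1) (by positivity) hc
  rw [Gamma_nat_eq_factorial] at h
  simp only [add_sub_cancel_right, rpow_natCast] at h
  rw [h, ← Nat.cast_succ, rpow_natCast, one_div, inv_pow, Nat.succ_eq_add_one, div_eq_inv_mul]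

/-- The sum over spherical shells of an exponential density gives its Coulomb potential at
distance `d` from the centre. -/
lemma lintegral_exp_shell {a d : ℝ} (ha : 0 < a) (hd : 0 < d) :
    ∫⁻ r in Set.Ioi 0, ENNReal.ofReal (4 * π * r ^ 2 / max r d) * ENNReal.ofReal (exp (-(a * r))) =
      ENNReal.ofReal (4 * π * (2 / (a ^ 3 * d) -
        (1 / a ^ 2 + 2 / (a ^ 3 * d)) * exp (-(a * d)))) := by
  set k : ℝ → ℝ := fun r => (r ^ 2 / d - r) * exp (-(a * r)) with hk
  have hkc : Continuous k := by fun_prop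
  have hsplit : ∀ r ∈ Set.Ioi (0 : ℝ),
      ENNReal.ofReal (4 * π * r ^ 2 / max r d) * ENNReal.ofReal (exp (-(a * r))) =
      ENNReal.ofReal (4 * π * (r ^ 1 * exp (-(a * r)) + (Set.Ioc 0 d).indicator k r)) := by
    intro r hr
    have hr : 0 < r := hr
    rw [← ENNReal.ofReal_mul (by positivity)]
    congr 1
    by_cases h : r ≤ d
    · rw [Set.indicator_of_mem (show r ∈ Set.Ioc 0 d from ⟨hr, h⟩), max_eq_right h, hk]
      ring
    · rw [Set.indicator_of_notMem (fun hc => h hc.2), max_eq_left (not_le.1 h).le]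
      field_simp
      ring
  have hnn : ∀ r ∈ Set.Ioi (0 : ℝ),
      0 ≤ 4 * π * (r ^ 1 * exp (-(a * r)) + (Set.Ioc 0 d).indicator k r) := by
    intro r hr
    have hr : 0 < r := hr
    refine mul_nonneg (by positivity) ?_
    by_cases h : r ∈ Set.Ioc 0 d
    · rw [Set.indicator_of_mem h, hk]
      have : r ^ 1 * exp (-(a * r)) + (r ^ 2 / d - r) * exp (-(a * r)) =
        r ^ 2 / d * exp (-(a * r)) := by ring
      exact this ▸ by positivity
    · rw [Set.indicator_of_notMem h]
      positivity
  have hi1 := integrableOn_pow_mul_exp_neg 1 ha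
  have hi2 : IntegrableOn ((Set.Ioc 0 d).indicator k) (Set.Ioi 0) :=
    ((integrable_indicator_iff measurableSet_Ioc).2
      (hkc.integrableOn_Icc.mono_set Set.Ioc_subset_Icc_self)).integrableOn
  have hderiv : ∀ r : ℝ, HasDerivAt (fun r => (-(1 / d) * (r ^ 2 / a + 2 * r / a ^ 2 + 2 / a ^ 3) +
      (r / a + 1 / a ^ 2)) * exp (-(a * r))) (k r) r := fun r => by
    have h1 : HasDerivAt (fun r : ℝ => exp (-(a * r))) (exp (-(a * r)) * -(a * 1)) r :=
      (((hasDerivAt_id r).const_mul a).neg).exp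
    have h2 : HasDerivAt (fun r : ℝ => -(1 / d) * (r ^ 2 / a + 2 * r / a ^ 2 + 2 / a ^ 3) +
        (r / a + 1 / a ^ 2))
        (-(1 / d) * (2 * r / a + 2 * 1 / a ^ 2) + 1 / a) r := by
      have h3 : HasDerivAt (fun r : ℝ => r ^ 2) (2 * r) r := by simpa using hasDerivAt_pow 2 r
      exact ((((h3.div_const a).add (((hasDerivAt_id r).const_mul 2).div_const (a ^ 2))).add_const
        (2 / a ^ 3)).const_mul (-(1 / d))).add (((hasDerivAt_id r).div_const a).add_const _)
    refine (h2.mul h1).congr_deriv ?_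
    rw [hk]
    field_simp
    ring
  have hFTC := intervalIntegral.integral_eq_sub_of_hasDerivAt (a := 0) (b := d)
    (fun r _ => hderiv r) (hkc.intervalIntegrable _ _)
  rw [intervalIntegral.integral_of_le hd.le] at hFTC
  have hI : Set.Ioi 0 ∩ Set.Ioc 0 d = Set.Ioc 0 d :=
    Set.inter_eq_right.2 fun _ h => h.1
  rw [setLIntegral_congr_fun measurableSet_Ioi hsplit, ← ofReal_integral_eq_lintegral_ofReal,
    integral_const_mul, integral_add hi1 hi2, integral_pow_mul_exp_neg 1 ha,
    setIntegral_indicator measurableSet_Ioc, hI, hFTC]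
  · congr 1
    simp
    field_simp
    ring
  · exact (hi1.add hi2).const_mul _
  · exact (ae_restrict_iff' measurableSet_Ioi).2 (ae_of_all _ hnn)

/-- The Coulomb potential of an exponential density. -/
lemma lintegral_exp_coulomb {a : ℝ} (ha : 0 < a) {y : EuclideanSpace ℝ (Fin 3)} (hy : y ≠ 0) :
    ∫⁻ x, ENNReal.ofReal (exp (-(a * ‖x‖))) * ENNReal.ofReal (1 / ‖x - y‖) =
      ENNReal.ofReal (4 * π * (2 / (a ^ 3 * ‖y‖) -
        (1 / a ^ 2 + 2 / (a ^ 3 * ‖y‖)) * exp (-(a * ‖y‖)))) := by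
  rw [lintegral_radial_coulomb (g := fun r => ENNReal.ofReal (exp (-(a * r)))) (by fun_prop) hy,
    lintegral_exp_shell ha (norm_pos_iff.2 hy)]

/-- Integration of `x i ^ 2` against a radial function. -/
lemma lintegral_sq_coord_radial {g : ℝ → ENNReal} (hg : Measurable g) (i : Fin 3) :
    ∫⁻ x : EuclideanSpace ℝ (Fin 3), ENNReal.ofReal (x i ^ 2) * g ‖x‖ =
      ∫⁻ r in Set.Ioi 0, ENNReal.ofReal (4 * π / 3 * r ^ 4) * g r := by
  rw [lintegral_spherical (F := fun q => ENNReal.ofReal (q.1 ^ 2) * g q.2) (by fun_prop) i]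
  refine setLIntegral_congr_fun measurableSet_Ioi fun r hr => ?_
  have hr : 0 < r := hr
  have h1 : ∀ θ ∈ Set.Ioo 0 π, ENNReal.ofReal (2 * π * r ^ 2 * sin θ) *
      (ENNReal.ofReal ((r * cos θ) ^ 2) * g r) =
      ENNReal.ofReal (2 * π * r ^ 4) * g r * ENNReal.ofReal (sin θ * cos θ ^ 2) := fun θ hθ => by
    have hs := (sin_pos_of_mem_Ioo hθ).le
    rw [← mul_assoc, mul_right_comm (ENNReal.ofReal _) (g r),
      ← ENNReal.ofReal_mul (by positivity), ← ENNReal.ofReal_mul (by positivity)]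
    congr 2
    ring
  have hderiv : ∀ θ : ℝ, HasDerivAt (fun θ => -(cos θ ^ 3) / 3) (sin θ * cos θ ^ 2) θ :=
    fun θ => by
      refine ((((hasDerivAt_cos θ).pow 3).neg).div_const 3).congr_deriv ?_
      norm_num
      ring
  have hcont : Continuous fun θ : ℝ => sin θ * cos θ ^ 2 := by fun_prop
  have hFTC := intervalIntegral.integral_eq_sub_of_hasDerivAt (a := 0) (b := π)
    (fun θ _ => hderiv θ) (hcont.intervalIntegrable _ _)
  rw [intervalIntegral.integral_of_le pi_pos.le] at hFTC
  have h2 : ∫⁻ θ in Set.Ioo 0 π, ENNReal.ofReal (sin θ * cos θ ^ 2) = ENNReal.ofReal (2 / 3) := by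
    rw [restrict_Ioo_eq_restrict_Ioc, ← ofReal_integral_eq_lintegral_ofReal, hFTC]
    · norm_num
    · exact hcont.integrableOn_Icc.mono_set Set.Ioc_subset_Icc_self
    · refine (ae_restrict_iff' measurableSet_Ioc).2 (ae_of_all _ fun θ hθ => ?_)
      exact mul_nonneg (sin_nonneg_of_nonneg_of_le_pi hθ.1.le hθ.2) (sq_nonneg _)
  rw [setLIntegral_congr_fun measurableSet_Ioo h1, lintegral_const_mul _ (by fun_prop), h2,
    mul_right_comm, ← ENNReal.ofReal_mul (by positivity)]
  congr 2
  ring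

/-- The Coulomb energy of the densities `exp (-a‖x‖)` and `(y i)² exp (-b‖y‖)`. -/
lemma lintegral_coulomb_exp_sq_coord_exp {a b : ℝ} (ha : 0 < a) (hb : 0 < b) (i : Fin 3) :
    ∫⁻ y : EuclideanSpace ℝ (Fin 3), ∫⁻ x : EuclideanSpace ℝ (Fin 3),
        ENNReal.ofReal (exp (-(a * ‖x‖)) * (y i ^ 2 * exp (-(b * ‖y‖))) / ‖x - y‖) =
      ENNReal.ofReal (16 * π ^ 2 / 3 * (2 / a ^ 3 * (6 / b ^ 4) -
        (1 / a ^ 2 * (24 / (a + b) ^ 5) + 2 / a ^ 3 * (6 / (a + b) ^ 4)))) := by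
  have hpot : ∀ y : EuclideanSpace ℝ (Fin 3), y ≠ 0 → ∫⁻ x : EuclideanSpace ℝ (Fin 3),
      ENNReal.ofReal (exp (-(a * ‖x‖)) * (y i ^ 2 * exp (-(b * ‖y‖))) / ‖x - y‖) =
      ENNReal.ofReal (y i ^ 2) * (ENNReal.ofReal (exp (-(b * ‖y‖))) *
        ENNReal.ofReal (4 * π * (2 / (a ^ 3 * ‖y‖) -
        (1 / a ^ 2 + 2 / (a ^ 3 * ‖y‖)) * exp (-(a * ‖y‖))))) := fun y hy => by
    rw [← lintegral_exp_coulomb ha hy, ← mul_assoc, ← ENNReal.ofReal_mul (by positivity),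
      ← lintegral_const_mul _ (by fun_prop)]
    refine lintegral_congr fun x => ?_
    rw [← ENNReal.ofReal_mul (by positivity), ← ENNReal.ofReal_mul (by positivity)]
    congr 1
    ring
  rw [lintegral_congr_ae ((Measure.ae_ne volume 0).mono hpot),
    lintegral_sq_coord_radial (g := fun r => ENNReal.ofReal (exp (-(b * r))) *
        ENNReal.ofReal (4 * π * (2 / (a ^ 3 * r) -
        (1 / a ^ 2 + 2 / (a ^ 3 * r)) * exp (-(a * r))))) (by fun_prop) i]
  have hab := add_pos ha hb
  have hrad : ∀ r ∈ Set.Ioi (0 : ℝ), ENNReal.ofReal (4 * π / 3 * r ^ 4) *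
      (ENNReal.ofReal (exp (-(b * r))) * ENNReal.ofReal (4 * π * (2 / (a ^ 3 * r) -
        (1 / a ^ 2 + 2 / (a ^ 3 * r)) * exp (-(a * r))))) =
      ENNReal.ofReal (16 * π ^ 2 / 3 * (2 / a ^ 3 * (r ^ 3 * exp (-(b * r))) -
        (1 / a ^ 2 * (r ^ 4 * exp (-((a + b) * r))) +
          2 / a ^ 3 * (r ^ 3 * exp (-((a + b) * r)))))) := by
    intro r hr
    have hr : 0 < r := hr
    rw [← ENNReal.ofReal_mul (by positivity), ← ENNReal.ofReal_mul (by positivity),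
      show -((a + b) * r) = -(a * r) + -(b * r) by ring, exp_add]
    congr 1
    field_simp
    ring
  have hnn : ∀ r ∈ Set.Ioi (0 : ℝ), 0 ≤ 16 * π ^ 2 / 3 * (2 / a ^ 3 * (r ^ 3 * exp (-(b * r))) -
        (1 / a ^ 2 * (r ^ 4 * exp (-((a + b) * r))) +
          2 / a ^ 3 * (r ^ 3 * exp (-((a + b) * r))))) := by
    intro r hr
    have hr : 0 < r := hr
    have h1 : (a * r + 1) * exp (-(a * r)) ≤ 1 := by
      rw [exp_neg, ← div_eq_mul_inv, div_le_one (exp_pos _)]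
      exact add_one_le_exp _
    have h2 : 0 ≤ 2 - (a * r + 2) * exp (-(a * r)) := by
      have : exp (-(a * r)) ≤ 1 := exp_le_one_iff.2 (by have := mul_pos ha hr; linarith)
      linarith
    have h3 : 2 / a ^ 3 * (r ^ 3 * exp (-(b * r))) -
        (1 / a ^ 2 * (r ^ 4 * exp (-((a + b) * r))) +
          2 / a ^ 3 * (r ^ 3 * exp (-((a + b) * r)))) =
        r ^ 3 / a ^ 3 * exp (-(b * r)) * (2 - (a * r + 2) * exp (-(a * r))) := by
      rw [show -((a + b) * r) = -(a * r) + -(b * r) by ring, exp_add]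
      field_simp
    rw [h3]
    exact mul_nonneg (by positivity) (mul_nonneg (by positivity) h2)
  have hi1 := (integrableOn_pow_mul_exp_neg 3 hb).const_mul (2 / a ^ 3)
  have hi2 := (integrableOn_pow_mul_exp_neg 4 hab).const_mul (1 / a ^ 2)
  have hi3 := (integrableOn_pow_mul_exp_neg 3 hab).const_mul (2 / a ^ 3)
  have hi23 : IntegrableOn (fun r => 1 / a ^ 2 * (r ^ 4 * exp (-((a + b) * r))) +
    2 / a ^ 3 * (r ^ 3 * exp (-((a + b) * r)))) (Set.Ioi 0) := hi2.add hi3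
  rw [setLIntegral_congr_fun measurableSet_Ioi hrad, ← ofReal_integral_eq_lintegral_ofReal,
    integral_const_mul, integral_sub hi1 hi23, integral_add hi2 hi3,
    integral_const_mul, integral_const_mul, integral_const_mul, integral_pow_mul_exp_neg 3 hb,
    integral_pow_mul_exp_neg 4 hab, integral_pow_mul_exp_neg 3 hab]
  · norm_num [Nat.factorial]
  · exact (hi1.sub hi23).const_mul _
  · exact (ae_restrict_iff' measurableSet_Ioi).2 (ae_of_all _ hnn)

/-- An iterated Bochner integral of a nonnegative function is determined by the iterated
lower integral in the other order, when the latter is finite. -/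
lemma integral_integral_eq_toReal_lintegral_swap {α β : Type*} [MeasurableSpace α]
    [MeasurableSpace β] {μ : Measure α} {ν : Measure β} [SFinite μ] [SFinite ν] {f : α → β → ℝ}
    (hf : Measurable (Function.uncurry f)) (hnn : ∀ x y, 0 ≤ f x y)
    (hfin : ∫⁻ y, ∫⁻ x, ENNReal.ofReal (f x y) ∂μ ∂ν ≠ ⊤) :
    ∫ x, ∫ y, f x y ∂ν ∂μ = (∫⁻ y, ∫⁻ x, ENNReal.ofReal (f x y) ∂μ ∂ν).toReal := by
  have hm : Measurable (Function.uncurry fun x y => ENNReal.ofReal (f x y)) := hf.ennreal_ofReal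
  have hswap := lintegral_lintegral_swap (μ := μ) (ν := ν) hm.aemeasurable
  have hinner : Measurable fun x => ∫⁻ y, ENNReal.ofReal (f x y) ∂ν := hm.lintegral_prod_right'
  rw [← hswap] at hfin ⊢
  rw [← integral_toReal hinner.aemeasurable (ae_lt_top hinner hfin)]
  congr 1 with x
  exact integral_eq_lintegral_of_nonneg_ae (ae_of_all _ (hnn x))
    (hf.comp measurable_prodMk_left).aestronglyMeasurable

/-- The Coulomb integral `(11|33)` between the 1s and 2p₃ Slater clouds. -/
theorem coulomb_1s_2p (Z₁ Z₃ : ℝ) (hZ₁ : 0 < Z₁) (hZ₃ : 0 < Z₃)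
    (φ1 φ3 : EuclideanSpace ℝ (Fin 3) → ℝ)
    (hφ1 : ∀ x, φ1 x = Z₁ ^ ((3:ℝ)/2) / Real.sqrt Real.pi * Real.exp (-Z₁ * ‖x‖))
    (hφ3 : ∀ x, φ3 x = Z₃ ^ ((5:ℝ)/2) / Real.sqrt (32 * Real.pi) * x 2 *
      Real.exp (-Z₃ * ‖x‖ / 2)) :
    ∫ x : EuclideanSpace ℝ (Fin 3), ∫ y : EuclideanSpace ℝ (Fin 3),
        (φ1 x) ^ 2 * (φ3 y) ^ 2 / ‖x - y‖
      = Z₁ * Z₃ * (8 * Z₁ ^ 4 + 20 * Z₁ ^ 3 * Z₃ + 20 * Z₁ ^ 2 * Z₃ ^ 2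
          + 10 * Z₁ * Z₃ ^ 3 + Z₃ ^ 4) / (2 * Z₁ + Z₃) ^ 5 := by
  have hrpow : ∀ {Z : ℝ} (n : ℕ), 0 < Z → (Z ^ ((n : ℝ) / 2)) ^ 2 = Z ^ n := fun n hZ => by
    rw [← rpow_natCast, ← rpow_mul hZ.le, Nat.cast_ofNat, div_mul_cancel₀ _ two_ne_zero,
      rpow_natCast]
  have h1 : ∀ x, φ1 x ^ 2 = Z₁ ^ 3 / π * exp (-(2 * Z₁ * ‖x‖)) := fun x => by
    have := hrpow 3 hZ₁
    rw [Nat.cast_ofNat] at this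
    rw [hφ1, mul_pow, div_pow, this, sq_sqrt pi_pos.le, ← exp_nat_mul]
    congr 2
    push_cast
    ring
  have h3 : ∀ y, φ3 y ^ 2 = Z₃ ^ 5 / (32 * π) * (y 2 ^ 2 * exp (-(Z₃ * ‖y‖))) := fun y => by
    have := hrpow 5 hZ₃
    rw [Nat.cast_ofNat] at this
    rw [hφ3, mul_pow, mul_pow, div_pow, this, sq_sqrt (by positivity), ← exp_nat_mul, mul_assoc]
    congr 3
    push_cast
    ring
  have hint : ∀ x y, φ1 x ^ 2 * φ3 y ^ 2 / ‖x - y‖ = Z₁ ^ 3 / π * (Z₃ ^ 5 / (32 * π)) *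
      (exp (-(2 * Z₁ * ‖x‖)) * (y 2 ^ 2 * exp (-(Z₃ * ‖y‖))) / ‖x - y‖) := fun x y => by
    rw [h1, h3]
    ring
  have hval := lintegral_coulomb_exp_sq_coord_exp (a := 2 * Z₁) (by positivity) hZ₃ 2
  simp_rw [hint, integral_const_mul]
  rw [integral_integral_eq_toReal_lintegral_swap (by fun_prop) (fun x y => by positivity)
    (hval ▸ ENNReal.ofReal_ne_top), hval, ENNReal.toReal_ofReal]
  · field_simp
    ring
  · have : 2 / (2 * Z₁) ^ 3 * (6 / Z₃ ^ 4) - (1 / (2 * Z₁) ^ 2 * (24 / (2 * Z₁ + Z₃) ^ 5) +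
        2 / (2 * Z₁) ^ 3 * (6 / (2 * Z₁ + Z₃) ^ 4)) =
        6 * (8 * Z₁ ^ 4 + 20 * Z₁ ^ 3 * Z₃ + 20 * Z₁ ^ 2 * Z₃ ^ 2
          + 10 * Z₁ * Z₃ ^ 3 + Z₃ ^ 4) / (Z₁ ^ 2 * Z₃ ^ 4 * (2 * Z₁ + Z₃) ^ 5) := by
      field_simp
      ring
    rw [this]
    positivity
end

section
/- The exchange integral between the 1s and 2p₃ Slater orbitals equals (13|31) = 112 Z₁³ Z₃⁵ / (3(2Z₁+Z₃)⁷). -/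
open MeasureTheory Real

lemma lintegral_prod_comp_sqrt_sq_add_sq {h : ℝ → ENNReal} (hh : Measurable h) :
    ∫⁻ p : ℝ × ℝ, h (√(p.1 ^ 2 + p.2 ^ 2)) =
      ENNReal.ofReal (2 * π) * ∫⁻ s in Set.Ioi (0 : ℝ), ENNReal.ofReal s * h s := by
  rw [← lintegral_comp_polarCoord_symm]
  have h1 : ∫⁻ p in polarCoord.target, ENNReal.ofReal p.1 •
        h (√((polarCoord.symm p).1 ^ 2 + (polarCoord.symm p).2 ^ 2)) =
      ∫⁻ p in Set.Ioi (0 : ℝ) ×ˢ Set.Ioo (-π) π, ENNReal.ofReal p.1 * h p.1 := by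
    rw [polarCoord_target]
    refine setLIntegral_congr_fun (measurableSet_Ioi.prod measurableSet_Ioo) ?_
    rintro ⟨r, θ⟩ ⟨hr, -⟩
    have hr' : (0 : ℝ) < r := hr
    have : (r * cos θ) ^ 2 + (r * sin θ) ^ 2 = r ^ 2 := by
      linear_combination r ^ 2 * sin_sq_add_cos_sq θ
    simp [polarCoord_symm_apply, this, sqrt_sq hr'.le]
  rw [h1, Measure.volume_eq_prod, ← Measure.prod_restrict, lintegral_prod _ (by fun_prop)]
  simp only [lintegral_const, Measure.restrict_apply_univ, Real.volume_Ioo]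
  rw [lintegral_mul_const _ (by fun_prop), mul_comm]
  congr 2
  ring

lemma setLIntegral_comp_sqrt_sq_add_sq (z : ℝ) (g : ℝ → ENNReal) :
    ∫⁻ s in Set.Ioi (0 : ℝ), ENNReal.ofReal s * g (√(z ^ 2 + s ^ 2)) =
      ∫⁻ ρ in Set.Ioi |z|, ENNReal.ofReal ρ * g ρ := by
  have himg : (fun s : ℝ => √(z ^ 2 + s ^ 2)) '' Set.Ioi 0 = Set.Ioi |z| := by
    ext ρ
    simp only [Set.mem_image, Set.mem_Ioi]
    constructor
    · rintro ⟨s, hs, rfl⟩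
      exact lt_sqrt_of_sq_lt (by rw [sq_abs]; nlinarith)
    · intro hρ
      have h2 : z ^ 2 < ρ ^ 2 := sq_lt_sq.2 (hρ.trans_le (le_abs_self ρ))
      refine ⟨√(ρ ^ 2 - z ^ 2), sqrt_pos.2 (by linarith), ?_⟩
      rw [sq_sqrt (by linarith)]
      simp [sqrt_sq ((abs_nonneg z).trans hρ.le)]
  have hpos : ∀ s ∈ Set.Ioi (0 : ℝ), 0 < z ^ 2 + s ^ 2 := by
    intro s hs
    have : (0 : ℝ) < s := hs
    positivity
  rw [← himg, lintegral_image_eq_lintegral_abs_deriv_mul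
    (f' := fun s => s / √(z ^ 2 + s ^ 2)) measurableSet_Ioi]
  · refine setLIntegral_congr_fun measurableSet_Ioi fun s hs => ?_
    have hs' : (0 : ℝ) < s := hs
    have h2 := sqrt_pos.2 (hpos s hs)
    rw [abs_of_pos (div_pos hs' h2), ← mul_assoc, ← ENNReal.ofReal_mul (by positivity),
      div_mul_cancel₀ _ h2.ne']
  · intro s hs
    have h1 : HasDerivAt (fun s : ℝ => z ^ 2 + s ^ 2) (2 * s) s := by
      simpa using (hasDerivAt_pow 2 s).const_add (z ^ 2)
    have h2 := (h1.sqrt (hpos s hs).ne').hasDerivWithinAt (s := Set.Ioi 0)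
    rwa [mul_div_mul_left _ _ (two_ne_zero' ℝ)] at h2
  · intro s hs t ht hst
    have hs' : (0 : ℝ) < s := hs
    have ht' : (0 : ℝ) < t := ht
    have := (sqrt_inj (hpos s hs).le (hpos t ht).le).1 hst
    exact (sq_eq_sq₀ hs'.le ht'.le).1 (by linarith)

/-- The joint law of `‖y‖` and `⟪e, y⟫` under Lebesgue measure on three-dimensional space, for
a unit vector `e`: the coordinate along a fixed axis is uniform on spheres. -/
lemma map_norm_inner_volume {e : EuclideanSpace ℝ (Fin 3)} (he : ‖e‖ = 1) :
    (volume : Measure (EuclideanSpace ℝ (Fin 3))).map (fun y => (‖y‖, inner ℝ e y)) =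
      (volume : Measure (ℝ × ℝ)).withDensity
        ({p | |p.2| < p.1}.indicator fun p => ENNReal.ofReal (2 * π * p.1)) := by
  have hS : MeasurableSet {p : ℝ × ℝ | |p.2| < p.1} :=
    measurableSet_lt (by fun_prop) (by fun_prop)
  refine Measure.ext_of_lintegral _ fun F hF => ?_
  obtain ⟨b, hb⟩ : ∃ b : OrthonormalBasis (Fin 3) ℝ (EuclideanSpace ℝ (Fin 3)), b 0 = e := by
    have horth : Orthonormal ℝ (({0} : Set (Fin 3)).domRestrict fun _ => e) := by
      rw [orthonormal_iff_ite]
      rintro ⟨i, hi⟩ ⟨j, hj⟩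
      obtain rfl : i = 0 := hi
      obtain rfl : j = 0 := hj
      simp [he]
    obtain ⟨b, hb⟩ := horth.exists_orthonormalBasis_extension_of_card_eq (by simp)
    exact ⟨b, hb 0 rfl⟩
  have hA : ∀ y, F (‖y‖, inner ℝ e y) =
      (fun w : Fin 3 → ℝ => F (√(w 0 ^ 2 + (w 1 ^ 2 + w 2 ^ 2)), w 0)) (b.repr y).ofLp := by
    intro y
    simp only [b.repr_apply_apply, hb]
    rw [← b.repr.norm_map y, EuclideanSpace.norm_eq, Fin.sum_univ_three]
    simp [b.repr_apply_apply, hb, add_assoc]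
  rw [lintegral_map hF (by fun_prop)]
  simp_rw [hA]
  refine (((PiLp.volume_preserving_ofLp (Fin 3)).comp b.measurePreserving_repr).lintegral_comp
    (f := fun w : Fin 3 → ℝ => F (√(w 0 ^ 2 + (w 1 ^ 2 + w 2 ^ 2)), w 0)) (by fun_prop)).trans ?_
  have hB := (volume_preserving_piFinSuccAbove (fun _ : Fin 3 => ℝ) 0).lintegral_comp
    (f := fun q : ℝ × (Fin 2 → ℝ) => F (√(q.1 ^ 2 + (q.2 0 ^ 2 + q.2 1 ^ 2)), q.1)) (by fun_prop)
  have hC : ∀ w : Fin 3 → ℝ, (fun q : ℝ × (Fin 2 → ℝ) =>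
      F (√(q.1 ^ 2 + (q.2 0 ^ 2 + q.2 1 ^ 2)), q.1))
        (MeasurableEquiv.piFinSuccAbove (fun _ : Fin 3 => ℝ) 0 w) =
      F (√(w 0 ^ 2 + (w 1 ^ 2 + w 2 ^ 2)), w 0) := fun w => rfl
  simp only [hC] at hB
  rw [hB, Measure.volume_eq_prod, lintegral_prod _ (by fun_prop)]
  have hD : ∀ z : ℝ, ∫⁻ u : Fin 2 → ℝ, F (√(z ^ 2 + (u 0 ^ 2 + u 1 ^ 2)), z) =
      ∫⁻ ρ in Set.Ioi |z|, ENNReal.ofReal (2 * π * ρ) * F (ρ, z) := by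
    intro z
    have h1 := (volume_preserving_finTwoArrow ℝ).lintegral_comp
      (f := fun p : ℝ × ℝ => F (√(z ^ 2 + (p.1 ^ 2 + p.2 ^ 2)), z)) (by fun_prop)
    have h2 := lintegral_prod_comp_sqrt_sq_add_sq (h := fun s => F (√(z ^ 2 + s ^ 2), z))
      (by fun_prop)
    have h3 : ∀ p : ℝ × ℝ, √(p.1 ^ 2 + p.2 ^ 2) ^ 2 = p.1 ^ 2 + p.2 ^ 2 :=
      fun p => sq_sqrt (by positivity)
    simp only [h3] at h2
    refine h1.trans (h2.trans ?_)
    rw [setLIntegral_comp_sqrt_sq_add_sq z (fun ρ => F (ρ, z)),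
      ← lintegral_const_mul _ (by fun_prop)]
    simp_rw [ENNReal.ofReal_mul two_pi_pos.le, mul_assoc]
  simp_rw [hD]
  rw [lintegral_withDensity_eq_lintegral_mul _ (Measurable.indicator (by fun_prop) hS) hF,
    Measure.volume_eq_prod, lintegral_prod_symm _
      ((Measurable.indicator (by fun_prop) hS).mul hF).aemeasurable]
  refine lintegral_congr fun z => ?_
  rw [← lintegral_indicator measurableSet_Ioi]
  refine lintegral_congr fun ρ => ?_
  by_cases h : |z| < ρ <;> simp [h, Set.indicator]

lemma integral_comp_norm_inner {e : EuclideanSpace ℝ (Fin 3)} (he : ‖e‖ = 1) {g : ℝ × ℝ → ℝ}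
    (hg : Measurable g) {B : ℝ → ℝ} (hB : IntegrableOn (fun ρ => ρ * B ρ) (Set.Ioi 0))
    (hs : ∀ᵐ ρ : ℝ, 0 < ρ → IntegrableOn (fun z => g (ρ, z)) (Set.Ioo (-ρ) ρ))
    (hb : ∀ᵐ ρ : ℝ, 0 < ρ → ∫ z in Set.Ioo (-ρ) ρ, |g (ρ, z)| ≤ B ρ) :
    Integrable (fun y => g (‖y‖, inner ℝ e y)) ∧
      ∫ y, g (‖y‖, inner ℝ e y) =
        ∫ ρ in Set.Ioi (0 : ℝ), 2 * π * ρ * ∫ z in Set.Ioo (-ρ) ρ, g (ρ, z) := by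
  have hS : MeasurableSet {p : ℝ × ℝ | |p.2| < p.1} :=
    measurableSet_lt (by fun_prop) (by fun_prop)
  set d : ℝ × ℝ → ENNReal :=
    {p : ℝ × ℝ | |p.2| < p.1}.indicator fun p => ENNReal.ofReal (2 * π * p.1) with hd
  have hdm : Measurable d := Measurable.indicator (by fun_prop) hS
  have hdt : ∀ p, d p < ⊤ := by
    intro p
    by_cases h : |p.2| < p.1 <;> simp [hd, h]
  have hslice : ∀ ρ, (fun z => (d (ρ, z)).toReal • g (ρ, z)) =
      (Set.Ioo (-ρ) ρ).indicator fun z => 2 * π * ρ * g (ρ, z) := by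
    intro ρ
    ext z
    by_cases h : |z| < ρ
    · have hρ : 0 ≤ ρ := (abs_nonneg z).trans h.le
      have h0 : 0 ≤ 2 * π * ρ := by positivity
      simp [hd, Set.indicator, h, abs_lt.1 h, ENNReal.toReal_ofReal h0]
    · have h' : ¬ (-ρ < z ∧ z < ρ) := fun h' => h (abs_lt.2 h')
      simp [hd, Set.indicator, h, h']
  have hempty : ∀ ρ : ℝ, ¬ 0 < ρ → Set.Ioo (-ρ) ρ = ∅ := fun ρ h =>
    Set.Ioo_eq_empty (by linarith)
  have hint : Integrable (fun p => (d p).toReal • g p) (volume.prod volume) := by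
    have hm : Measurable fun p => (d p).toReal • g p := hdm.ennreal_toReal.smul hg
    rw [integrable_prod_iff hm.aestronglyMeasurable]
    constructor
    · filter_upwards [hs] with ρ h
      rw [hslice, integrable_indicator_iff measurableSet_Ioo]
      by_cases hρ : 0 < ρ
      · exact (h hρ).const_mul _
      · simp [hempty ρ hρ]
    · have hdom : Integrable ((Set.Ioi (0 : ℝ)).indicator fun ρ => 2 * π * (ρ * B ρ)) :=
        (integrable_indicator_iff measurableSet_Ioi).2 (hB.const_mul _)
      refine hdom.mono' hm.norm.stronglyMeasurable.integral_prod_right.aestronglyMeasurable ?_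
      filter_upwards [hb] with ρ h
      have h1 : ∀ z, ‖(d (ρ, z)).toReal • g (ρ, z)‖ =
          (Set.Ioo (-ρ) ρ).indicator (fun z => ‖2 * π * ρ * g (ρ, z)‖) z := by
        intro z
        rw [congrFun (hslice ρ) z, norm_indicator_eq_indicator_norm]
      simp_rw [h1]
      rw [integral_indicator measurableSet_Ioo]
      by_cases hρ : 0 < ρ
      · have h0 : 0 ≤ 2 * π * ρ := by positivity
        rw [Set.indicator_of_mem (Set.mem_Ioi.2 hρ), norm_of_nonneg
          (integral_nonneg fun z => norm_nonneg _)]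
        simp_rw [norm_mul (2 * π * ρ), norm_of_nonneg h0, norm_eq_abs]
        rw [integral_const_mul, ← mul_assoc]
        exact mul_le_mul_of_nonneg_left (h hρ) h0
      · simp [Set.indicator, hρ]
  have hφ : Measurable fun y : EuclideanSpace ℝ (Fin 3) => (‖y‖, inner ℝ e y) := by fun_prop
  have hmap := map_norm_inner_volume he
  rw [← hd] at hmap
  constructor
  · refine (integrable_map_measure (g := g) hg.aestronglyMeasurable hφ.aemeasurable).1 ?_
    rw [hmap, integrable_withDensity_iff_integrable_smul' hdm (.of_forall hdt)]
    exact hint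
  · rw [← integral_map (f := g) hφ.aemeasurable hg.aestronglyMeasurable, hmap,
      integral_withDensity_eq_integral_toReal_smul hdm (.of_forall hdt),
      Measure.volume_eq_prod, integral_prod _ hint]
    simp_rw [hslice, integral_indicator measurableSet_Ioo, integral_const_mul]
    refine (setIntegral_eq_integral_of_forall_compl_eq_zero fun ρ hρ => ?_).symm
    simp [hempty ρ hρ]

lemma integral_pow_mul_exp_neg_mul_Ioi (n : ℕ) {a : ℝ} (ha : 0 < a) :
    ∫ t in Set.Ioi (0 : ℝ), t ^ n * exp (-(a * t)) = n.factorial / a ^ (n + 1) := by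
  have h := integral_rpow_mul_exp_neg_mul_Ioi (a := n + 1) (r := a) (by positivity) ha
  rw [Gamma_nat_eq_factorial] at h
  simp only [add_sub_cancel_right, rpow_natCast] at h
  rw [h]
  norm_cast
  rw [div_pow, one_pow, one_div_mul_eq_div]

lemma integrableOn_pow_mul_exp_neg_mul_Ioi (n : ℕ) {a : ℝ} (ha : 0 < a) :
    IntegrableOn (fun t : ℝ => t ^ n * exp (-(a * t))) (Set.Ioi 0) := by
  refine Integrable.of_integral_ne_zero ?_
  rw [integral_pow_mul_exp_neg_mul_Ioi n ha]
  positivity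

lemma sq_add_sq_sub_two_mul_pos {ρ r z : ℝ} (hr : 0 < r) (hne : ρ ≠ r)
    (hz : z ≤ ρ) : 0 < ρ ^ 2 + r ^ 2 - 2 * r * z := by
  have : 0 < (ρ - r) ^ 2 := by
    have := sub_ne_zero.2 hne
    positivity
  nlinarith

lemma hasDerivAt_sqrt_sq_add_sq_sub {ρ r z : ℝ} (h : 0 < ρ ^ 2 + r ^ 2 - 2 * r * z) :
    HasDerivAt (fun z => √(ρ ^ 2 + r ^ 2 - 2 * r * z)) (-r / √(ρ ^ 2 + r ^ 2 - 2 * r * z)) z := by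
  have h1 : HasDerivAt (fun z : ℝ => ρ ^ 2 + r ^ 2 - 2 * r * z) (-(2 * r)) z := by
    simpa using ((hasDerivAt_id z).const_mul (2 * r)).const_sub (ρ ^ 2 + r ^ 2)
  have h2 := h1.sqrt h.ne'
  rwa [← mul_neg, mul_div_mul_left _ _ (two_ne_zero' ℝ)] at h2

lemma continuousOn_div_sqrt_sq_add_sq_sub {ρ r : ℝ} (hr : 0 < r) (hne : ρ ≠ r)
    {f : ℝ → ℝ} (hf : Continuous f) :
    ContinuousOn (fun z => f z / √(ρ ^ 2 + r ^ 2 - 2 * r * z)) (Set.Icc (-ρ) ρ) :=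
  hf.continuousOn.div (by fun_prop) fun _ hz =>
    (sqrt_pos.2 (sq_add_sq_sub_two_mul_pos hr hne hz.2)).ne'

lemma integral_inv_sqrt_sq_add_sq_sub {ρ r : ℝ} (hρ : 0 < ρ) (hr : 0 < r) (hne : ρ ≠ r) :
    ∫ z in Set.Ioo (-ρ) ρ, 1 / √(ρ ^ 2 + r ^ 2 - 2 * r * z) = (ρ + r - |ρ - r|) / r := by
  have hle : -ρ ≤ ρ := by linarith
  rw [← integral_Ioc_eq_integral_Ioo, ← intervalIntegral.integral_of_le hle,
    intervalIntegral.integral_eq_sub_of_hasDerivAt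
      (f := fun z => -√(ρ ^ 2 + r ^ 2 - 2 * r * z) / r)]
  · rw [show ρ ^ 2 + r ^ 2 - 2 * r * ρ = (ρ - r) ^ 2 by ring,
      show ρ ^ 2 + r ^ 2 - 2 * r * -ρ = (ρ + r) ^ 2 by ring, sqrt_sq_eq_abs, sqrt_sq (by positivity)]
    ring
  · intro z hz
    rw [Set.uIcc_of_le hle] at hz
    have h := sq_add_sq_sub_two_mul_pos hr hne hz.2
    refine ((hasDerivAt_sqrt_sq_add_sq_sub h).fun_neg.div_const r).congr_deriv ?_
    have := sqrt_pos.2 h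
    field_simp
  · refine ContinuousOn.intervalIntegrable ?_
    rw [Set.uIcc_of_le hle]
    exact continuousOn_div_sqrt_sq_add_sq_sub hr hne continuous_const

lemma integral_div_sqrt_sq_add_sq_sub {ρ r : ℝ} (hρ : 0 < ρ) (hr : 0 < r) (hne : ρ ≠ r) :
    ∫ z in Set.Ioo (-ρ) ρ, z / √(ρ ^ 2 + r ^ 2 - 2 * r * z) =
      2 / 3 * min ρ r ^ 3 / r ^ 2 := by
  have hle : -ρ ≤ ρ := by linarith
  rw [← integral_Ioc_eq_integral_Ioo, ← intervalIntegral.integral_of_le hle,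
    intervalIntegral.integral_eq_sub_of_hasDerivAt
      (f := fun z => (√(ρ ^ 2 + r ^ 2 - 2 * r * z) ^ 3 / 3 -
        (ρ ^ 2 + r ^ 2) * √(ρ ^ 2 + r ^ 2 - 2 * r * z)) / (2 * r ^ 2))]
  · rw [show ρ ^ 2 + r ^ 2 - 2 * r * ρ = (ρ - r) ^ 2 by ring,
      show ρ ^ 2 + r ^ 2 - 2 * r * -ρ = (ρ + r) ^ 2 by ring, sqrt_sq_eq_abs, sqrt_sq (by positivity)]
    rcases le_total ρ r with h | h
    · rw [abs_of_nonpos (by linarith), min_eq_left h]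
      ring
    · rw [abs_of_nonneg (by linarith), min_eq_right h]
      ring
  · intro z hz
    rw [Set.uIcc_of_le hle] at hz
    have h := sq_add_sq_sub_two_mul_pos hr hne hz.2
    have hd := hasDerivAt_sqrt_sq_add_sq_sub h
    refine (((hd.fun_pow 3).div_const 3 |>.fun_sub (hd.const_mul (ρ ^ 2 + r ^ 2))).div_const
      (2 * r ^ 2)).congr_deriv ?_
    have h1 := sqrt_pos.2 h
    have h2 := sq_sqrt h.le
    generalize √(ρ ^ 2 + r ^ 2 - 2 * r * z) = s at h1 h2
    field_simp
    norm_num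
    linear_combination (-3 : ℝ) * h2
  · refine ContinuousOn.intervalIntegrable ?_
    rw [Set.uIcc_of_le hle]
    exact continuousOn_div_sqrt_sq_add_sq_sub hr hne continuous_id

/-- The radial profile of the potential of the density `y ↦ y₃ exp (-κ‖y‖)`. -/
noncomputable def dipolePotential (κ r : ℝ) : ℝ :=
  4 * π / 3 * (24 / κ ^ 5 - exp (-(κ * r)) *
    (3 * r ^ 3 / κ ^ 2 + 12 * r ^ 2 / κ ^ 3 + 24 * r / κ ^ 4 + 24 / κ ^ 5)) / r ^ 2

lemma integral_mul_exp_mul_min {κ r : ℝ} (hκ : 0 < κ) (hr : 0 < r) :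
    ∫ ρ in Set.Ioi (0 : ℝ), 2 * π * ρ * (exp (-(κ * ρ)) * (2 / 3 * min ρ r ^ 3 / r ^ 2)) =
      dipolePotential κ r := by
  have hexp : ∀ t : ℝ, HasDerivAt (fun t => exp (-(κ * t))) (exp (-(κ * t)) * -κ) t := by
    intro t
    have : HasDerivAt (fun t : ℝ => -(κ * t)) (-κ) t := by
      simpa using ((hasDerivAt_id t).const_mul κ).fun_neg
    exact this.exp
  have hA : ∫ ρ in (0 : ℝ)..r, ρ ^ 4 * exp (-(κ * ρ)) = 24 / κ ^ 5 - exp (-(κ * r)) *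
      (r ^ 4 / κ + 4 * r ^ 3 / κ ^ 2 + 12 * r ^ 2 / κ ^ 3 + 24 * r / κ ^ 4 + 24 / κ ^ 5) := by
    rw [intervalIntegral.integral_eq_sub_of_hasDerivAt (f := fun t => -exp (-(κ * t)) *
      (t ^ 4 / κ + 4 * t ^ 3 / κ ^ 2 + 12 * t ^ 2 / κ ^ 3 + 24 * t / κ ^ 4 + 24 / κ ^ 5))]
    · simp
      ring
    · intro t _
      have hp : HasDerivAt (fun t : ℝ => t ^ 4 / κ + 4 * t ^ 3 / κ ^ 2 + 12 * t ^ 2 / κ ^ 3 +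
          24 * t / κ ^ 4 + 24 / κ ^ 5)
          (4 * t ^ 3 / κ + 12 * t ^ 2 / κ ^ 2 + 24 * t / κ ^ 3 + 24 / κ ^ 4) t := by
        refine ((((((hasDerivAt_pow 4 t).div_const κ).fun_add
          (((hasDerivAt_pow 3 t).const_mul 4).div_const (κ ^ 2))).fun_add
          (((hasDerivAt_pow 2 t).const_mul 12).div_const (κ ^ 3))).fun_add
          (((hasDerivAt_id t).const_mul 24).div_const (κ ^ 4))).add_const _).congr_deriv ?_
        norm_num
        ring
      refine ((hexp t).fun_neg.fun_mul hp).congr_deriv ?_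
      field_simp
      ring
    · exact Continuous.intervalIntegrable (by fun_prop) _ _
  have hB0 : ∫ ρ in (0 : ℝ)..r, ρ ^ 1 * exp (-(κ * ρ)) =
      1 / κ ^ 2 - exp (-(κ * r)) * (r / κ + 1 / κ ^ 2) := by
    rw [intervalIntegral.integral_eq_sub_of_hasDerivAt
      (f := fun t => -exp (-(κ * t)) * (t / κ + 1 / κ ^ 2))]
    · simp
      ring
    · intro t _
      have hp : HasDerivAt (fun t : ℝ => t / κ + 1 / κ ^ 2) (1 / κ) t :=
        ((hasDerivAt_id t).div_const κ).add_const _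
      refine ((hexp t).fun_neg.fun_mul hp).congr_deriv ?_
      field_simp
      ring
    · exact Continuous.intervalIntegrable (by fun_prop) _ _
  have hi1 := integrableOn_pow_mul_exp_neg_mul_Ioi 1 hκ
  have hB : ∫ ρ in Set.Ioi r, ρ ^ 1 * exp (-(κ * ρ)) = exp (-(κ * r)) * (r / κ + 1 / κ ^ 2) := by
    have h := intervalIntegral.integral_interval_add_Ioi hi1
      (hi1.mono_set (Set.Ioi_subset_Ioi hr.le))
    rw [hB0, integral_pow_mul_exp_neg_mul_Ioi 1 hκ] at h
    norm_num at h ⊢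
    linarith
  have hE1 : Set.EqOn (fun ρ => 2 * π * ρ * (exp (-(κ * ρ)) * (2 / 3 * min ρ r ^ 3 / r ^ 2)))
      (fun ρ => 4 * π / 3 / r ^ 2 * (ρ ^ 4 * exp (-(κ * ρ)))) (Set.Ioc 0 r) := by
    intro ρ hρ
    simp only [min_eq_left hρ.2]
    ring
  have hE2 : Set.EqOn (fun ρ => 2 * π * ρ * (exp (-(κ * ρ)) * (2 / 3 * min ρ r ^ 3 / r ^ 2)))
      (fun ρ => 4 * π / 3 * r * (ρ ^ 1 * exp (-(κ * ρ)))) (Set.Ioi r) := by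
    intro ρ hρ
    simp only [min_eq_right (Set.mem_Ioi.1 hρ).le]
    field_simp
    ring
  have hI1 : IntegrableOn (fun ρ => 4 * π / 3 / r ^ 2 * (ρ ^ 4 * exp (-(κ * ρ))))
      (Set.Ioc 0 r) :=
    ((integrableOn_pow_mul_exp_neg_mul_Ioi 4 hκ).mono_set Set.Ioc_subset_Ioi_self).const_mul _
  have hI2 : IntegrableOn (fun ρ => 4 * π / 3 * r * (ρ ^ 1 * exp (-(κ * ρ)))) (Set.Ioi r) :=
    (hi1.mono_set (Set.Ioi_subset_Ioi hr.le)).const_mul _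
  rw [← Set.Ioc_union_Ioi_eq_Ioi hr.le, setIntegral_union (Set.Ioc_disjoint_Ioi le_rfl)
    measurableSet_Ioi (hI1.congr_fun hE1.symm measurableSet_Ioc)
    (hI2.congr_fun hE2.symm measurableSet_Ioi), setIntegral_congr_fun measurableSet_Ioc hE1,
    setIntegral_congr_fun measurableSet_Ioi hE2, integral_const_mul, integral_const_mul, hB,
    ← intervalIntegral.integral_of_le hr.le, hA, dipolePotential]
  field_simp
  ring

lemma norm_smul_sub_eq_sqrt {e : EuclideanSpace ℝ (Fin 3)} (he : ‖e‖ = 1) (r : ℝ)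
    (y : EuclideanSpace ℝ (Fin 3)) :
    ‖r • e - y‖ = √(‖y‖ ^ 2 + r ^ 2 - 2 * r * inner ℝ e y) := by
  rw [← sqrt_sq (norm_nonneg (r • e - y)), norm_sub_sq_real, norm_smul, he, inner_smul_left]
  simp only [norm_eq_abs, mul_one, sq_abs, conj_trivial]
  ring_nf

lemma ae_imp_of_forall_ne {r : ℝ} {p : ℝ → Prop} (h : ∀ ρ, 0 < ρ → ρ ≠ r → p ρ) :
    ∀ᵐ ρ : ℝ, 0 < ρ → p ρ := by
  filter_upwards [Measure.ae_ne volume r] with ρ hne hρ using h ρ hρ hne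

lemma integrableOn_const_mul_div_sqrt {ρ r : ℝ} (hr : 0 < r) (hne : ρ ≠ r) {f : ℝ → ℝ}
    (hf : Continuous f) (c : ℝ) :
    IntegrableOn (fun z => c * (f z / √(ρ ^ 2 + r ^ 2 - 2 * r * z))) (Set.Ioo (-ρ) ρ) :=
  (((continuousOn_div_sqrt_sq_add_sq_sub hr hne hf).integrableOn_Icc).mono_set
    Set.Ioo_subset_Icc_self).const_mul c

lemma integral_inv_sqrt_le {ρ r : ℝ} (hρ : 0 < ρ) (hr : 0 < r) (hne : ρ ≠ r) :
    ∫ z in Set.Ioo (-ρ) ρ, 1 / √(ρ ^ 2 + r ^ 2 - 2 * r * z) ≤ 2 := by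
  rw [integral_inv_sqrt_sq_add_sq_sub hρ hr hne, div_le_iff₀ hr]
  linarith [le_abs_self (ρ - r)]

lemma integrable_norm_mul_exp_div_norm_sub {κ r : ℝ} (hκ : 0 < κ) (hr : 0 < r)
    {e : EuclideanSpace ℝ (Fin 3)} (he : ‖e‖ = 1) :
    Integrable fun y : EuclideanSpace ℝ (Fin 3) => ‖y‖ * exp (-(κ * ‖y‖)) / ‖r • e - y‖ := by
  have h := (integral_comp_norm_inner he
    (g := fun p => p.1 * exp (-(κ * p.1)) * (1 / √(p.1 ^ 2 + r ^ 2 - 2 * r * p.2)))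
    (by fun_prop) (B := fun ρ => ρ * exp (-(κ * ρ)) * 2)
    (IntegrableOn.congr_fun ((integrableOn_pow_mul_exp_neg_mul_Ioi 2 hκ).const_mul 2)
      (fun ρ _ => by ring) measurableSet_Ioi)
    (ae_imp_of_forall_ne (r := r) fun ρ _ hne =>
      integrableOn_const_mul_div_sqrt hr hne (f := fun _ => 1) continuous_const (ρ * exp (-(κ * ρ))))
    (ae_imp_of_forall_ne (r := r) fun ρ hρ hne => by
      have h0 : 0 ≤ ρ * exp (-(κ * ρ)) := by positivity
      have h1 : ∀ z, |ρ * exp (-(κ * ρ)) * (1 / √(ρ ^ 2 + r ^ 2 - 2 * r * z))| =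
          ρ * exp (-(κ * ρ)) * (1 / √(ρ ^ 2 + r ^ 2 - 2 * r * z)) :=
        fun z => abs_of_nonneg (by positivity)
      simp_rw [h1]
      rw [integral_const_mul]
      exact mul_le_mul_of_nonneg_left (integral_inv_sqrt_le hρ hr hne) h0)).1
  refine h.congr (.of_forall fun y => ?_)
  simp only [norm_smul_sub_eq_sqrt he, mul_one_div]

lemma integral_inner_mul_exp_div_norm_sub {κ r : ℝ} (hκ : 0 < κ) (hr : 0 < r)
    {e : EuclideanSpace ℝ (Fin 3)} (he : ‖e‖ = 1) :
    ∫ y : EuclideanSpace ℝ (Fin 3), inner ℝ e y * exp (-(κ * ‖y‖)) / ‖r • e - y‖ =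
      dipolePotential κ r := by
  have h := (integral_comp_norm_inner he
    (g := fun p => exp (-(κ * p.1)) * (p.2 / √(p.1 ^ 2 + r ^ 2 - 2 * r * p.2)))
    (by fun_prop) (B := fun ρ => ρ * exp (-(κ * ρ)) * 2)
    (IntegrableOn.congr_fun ((integrableOn_pow_mul_exp_neg_mul_Ioi 2 hκ).const_mul 2)
      (fun ρ _ => by ring) measurableSet_Ioi)
    (ae_imp_of_forall_ne (r := r) fun ρ _ hne =>
      integrableOn_const_mul_div_sqrt hr hne (f := fun z => z) continuous_id (exp (-(κ * ρ))))
    (ae_imp_of_forall_ne (r := r) fun ρ hρ hne => by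
      have h0 : 0 ≤ ρ * exp (-(κ * ρ)) := by positivity
      refine le_trans ?_ (mul_le_mul_of_nonneg_left (integral_inv_sqrt_le hρ hr hne) h0)
      rw [← integral_const_mul]
      refine setIntegral_mono_on
        (integrableOn_const_mul_div_sqrt hr hne (f := fun z => z) continuous_id (exp (-(κ * ρ)))).abs
        (integrableOn_const_mul_div_sqrt hr hne (f := fun _ => 1) continuous_const (ρ * exp (-(κ * ρ)))) measurableSet_Ioo ?_
      intro z hz
      have hz' : |z| ≤ ρ := (abs_lt.2 hz).le
      rw [abs_mul, abs_div, abs_of_nonneg (exp_pos _).le, abs_of_nonneg (sqrt_nonneg _)]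
      calc exp (-(κ * ρ)) * (|z| / √(ρ ^ 2 + r ^ 2 - 2 * r * z))
          ≤ exp (-(κ * ρ)) * (ρ / √(ρ ^ 2 + r ^ 2 - 2 * r * z)) := by gcongr
        _ = _ := by ring)).2
  have h2 : ∫ ρ in Set.Ioi (0 : ℝ), 2 * π * ρ * ∫ z in Set.Ioo (-ρ) ρ,
      exp (-(κ * ρ)) * (z / √(ρ ^ 2 + r ^ 2 - 2 * r * z)) = dipolePotential κ r := by
    rw [← integral_mul_exp_mul_min hκ hr]
    refine setIntegral_congr_ae measurableSet_Ioi (ae_imp_of_forall_ne (r := r) fun ρ hρ hne => ?_)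
    rw [integral_const_mul, integral_div_sqrt_sq_add_sq_sub hρ hr hne]
  rw [← h2, ← h]
  refine integral_congr_ae (.of_forall fun y => ?_)
  simp only [norm_smul_sub_eq_sqrt he]
  ring

lemma integral_coord_mul_exp_div_norm_sub {κ : ℝ} (hκ : 0 < κ) {x : EuclideanSpace ℝ (Fin 3)}
    (hx : x ≠ 0) (i : Fin 3) :
    ∫ y : EuclideanSpace ℝ (Fin 3), y i * exp (-(κ * ‖y‖)) / ‖x - y‖ =
      x i / ‖x‖ * dipolePotential κ ‖x‖ := by
  have hr : 0 < ‖x‖ := norm_pos_iff.2 hx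
  obtain ⟨e, he, hxe⟩ : ∃ e : EuclideanSpace ℝ (Fin 3), ‖e‖ = 1 ∧ x = ‖x‖ • e :=
    ⟨‖x‖⁻¹ • x, by simp [norm_smul, hr.ne'], by rw [smul_smul, mul_inv_cancel₀ hr.ne', one_smul]⟩
  generalize ‖x‖ = r at hr hxe ⊢
  subst hxe
  have hbase := integrable_norm_mul_exp_div_norm_sub hκ hr he
  have hmono : ∀ f : EuclideanSpace ℝ (Fin 3) → ℝ, Measurable f → (∀ y, |f y| ≤ ‖y‖) →
      Integrable fun y => f y * exp (-(κ * ‖y‖)) / ‖r • e - y‖ := by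
    intro f hf hfy
    refine hbase.mono' (Measurable.aestronglyMeasurable (by fun_prop)) (.of_forall fun y => ?_)
    rw [norm_eq_abs, abs_div, abs_mul, abs_norm, abs_of_pos (exp_pos _)]
    have := hfy y
    gcongr
  have hi : Integrable fun y : EuclideanSpace ℝ (Fin 3) =>
      y i * exp (-(κ * ‖y‖)) / ‖r • e - y‖ :=
    hmono (fun y => y i) (by fun_prop) fun y => PiLp.norm_apply_le y i
  have he' : Integrable fun y : EuclideanSpace ℝ (Fin 3) =>
      inner ℝ e y * exp (-(κ * ‖y‖)) / ‖r • e - y‖ :=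
    hmono (fun y => inner ℝ e y) (by fun_prop) fun y => by
      simpa [he] using abs_real_inner_le_norm e y
  set R := (Submodule.span ℝ {e}).reflection with hR
  have hRy : ∀ y, R y = (2 * inner ℝ e y) • e - y := by
    intro y
    rw [hR, Submodule.reflection_singleton_apply, he]
    simp [two_smul, two_mul, add_smul]
  have hRe : R (r • e) = r • e := by
    rw [hRy, inner_smul_right, real_inner_self_eq_norm_sq, he, ← sub_smul]
    congr 1
    ring
  have hsub : ∀ y, ‖r • e - R y‖ = ‖r • e - y‖ := by
    intro y
    rw [← R.norm_map (r • e - y), map_sub, hRe]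
  have hrefl : ∫ y : EuclideanSpace ℝ (Fin 3), R y i * exp (-(κ * ‖y‖)) / ‖r • e - y‖ =
      ∫ y : EuclideanSpace ℝ (Fin 3), y i * exp (-(κ * ‖y‖)) / ‖r • e - y‖ := by
    rw [← R.measurePreserving.integral_comp R.toHomeomorph.measurableEmbedding
      (fun y : EuclideanSpace ℝ (Fin 3) => y i * exp (-(κ * ‖y‖)) / ‖r • e - y‖)]
    simp only [hsub, R.norm_map]
  have hsplit : ∀ y : EuclideanSpace ℝ (Fin 3), R y i * exp (-(κ * ‖y‖)) / ‖r • e - y‖ =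
      2 * e i * (inner ℝ e y * exp (-(κ * ‖y‖)) / ‖r • e - y‖) -
        y i * exp (-(κ * ‖y‖)) / ‖r • e - y‖ := by
    intro y
    simp only [hRy, PiLp.sub_apply, PiLp.smul_apply, smul_eq_mul]
    ring
  simp_rw [hsplit] at hrefl
  rw [integral_sub (he'.const_mul _) hi, integral_const_mul,
    integral_inner_mul_exp_div_norm_sub hκ hr he] at hrefl
  rw [PiLp.smul_apply, smul_eq_mul, mul_div_cancel_left₀ _ hr.ne']
  linarith

lemma integral_coord_sq_mul_dipolePotential {κ : ℝ} (hκ : 0 < κ) (i : Fin 3) :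
    ∫ x : EuclideanSpace ℝ (Fin 3),
        x i ^ 2 * (exp (-(κ * ‖x‖)) * dipolePotential κ ‖x‖ / ‖x‖) =
      28 * π ^ 2 / 3 / κ ^ 7 := by
  have h2κ : 0 < 2 * κ := by positivity
  have he : ‖EuclideanSpace.single i (1 : ℝ)‖ = 1 := by simp
  set h : ℝ → ℝ := fun ρ => exp (-(κ * ρ)) * dipolePotential κ ρ / ρ with hh
  set Q : ℝ → ℝ := fun ρ => 4 * π / 3 * (24 / κ ^ 5 * (ρ ^ 1 * exp (-(κ * ρ))) -
    (3 / κ ^ 2 * (ρ ^ 4 * exp (-(2 * κ * ρ))) + 12 / κ ^ 3 * (ρ ^ 3 * exp (-(2 * κ * ρ))) +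
      24 / κ ^ 4 * (ρ ^ 2 * exp (-(2 * κ * ρ))) + 24 / κ ^ 5 * (ρ ^ 1 * exp (-(2 * κ * ρ)))))
    with hQ
  have hhQ : ∀ ρ ∈ Set.Ioi (0 : ℝ), Q ρ = ρ ^ 4 * h ρ := by
    intro ρ hρ
    have hρ' : (0 : ℝ) < ρ := hρ
    have hexp : exp (-(2 * κ * ρ)) = exp (-(κ * ρ)) * exp (-(κ * ρ)) := by
      rw [← exp_add]; ring_nf
    simp only [hQ, hh, dipolePotential, hexp]
    field_simp
  have hj1 := (integrableOn_pow_mul_exp_neg_mul_Ioi 1 hκ).const_mul (24 / κ ^ 5)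
  have hk4 := (integrableOn_pow_mul_exp_neg_mul_Ioi 4 h2κ).const_mul (3 / κ ^ 2)
  have hk3 := (integrableOn_pow_mul_exp_neg_mul_Ioi 3 h2κ).const_mul (12 / κ ^ 3)
  have hk2 := (integrableOn_pow_mul_exp_neg_mul_Ioi 2 h2κ).const_mul (24 / κ ^ 4)
  have hk1 := (integrableOn_pow_mul_exp_neg_mul_Ioi 1 h2κ).const_mul (24 / κ ^ 5)
  have hk1234 := ((hk4.fun_add hk3).fun_add hk2).fun_add hk1
  have hQi : IntegrableOn Q (Set.Ioi 0) :=
    (hj1.sub hk1234).const_mul _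
  have hQv : ∫ ρ in Set.Ioi (0 : ℝ), Q ρ = 7 * π / κ ^ 7 := by
    simp only [hQ]
    rw [integral_const_mul, integral_sub hj1 hk1234,
      integral_add ((hk4.fun_add hk3).fun_add hk2) hk1, integral_add (hk4.fun_add hk3) hk2,
      integral_add hk4 hk3]
    simp only [integral_const_mul, integral_pow_mul_exp_neg_mul_Ioi _ hκ,
      integral_pow_mul_exp_neg_mul_Ioi _ h2κ]
    norm_num [Nat.factorial]
    field_simp
    norm_num
  have hsq : ∀ ρ : ℝ, 0 < ρ → ∫ z in Set.Ioo (-ρ) ρ, z ^ 2 = 2 / 3 * ρ ^ 3 := by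
    intro ρ hρ
    rw [← integral_Ioc_eq_integral_Ioo, ← intervalIntegral.integral_of_le (by linarith),
      integral_pow]
    norm_num
    ring
  have key := (integral_comp_norm_inner he (g := fun p => p.2 ^ 2 * h p.1)
    (by simp only [hh, dipolePotential]; fun_prop) (B := fun ρ => 2 / 3 * ρ ^ 3 * |h ρ|)
    (IntegrableOn.congr_fun (hQi.abs.const_mul (2 / 3)) (fun ρ hρ => by
      simp only [hhQ ρ hρ, abs_mul, abs_of_pos (pow_pos (Set.mem_Ioi.1 hρ) 4)]
      ring) measurableSet_Ioi)
    (.of_forall fun ρ _ => ((((continuous_pow 2).mul_const (h ρ)).integrableOn_Icc).mono_set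
      Set.Ioo_subset_Icc_self))
    (.of_forall fun ρ hρ => by
      simp only [abs_mul, abs_of_nonneg (sq_nonneg (_ : ℝ))]
      rw [integral_mul_const, hsq ρ hρ])).2
  have hfin : ∫ ρ in Set.Ioi (0 : ℝ), 2 * π * ρ * ∫ z in Set.Ioo (-ρ) ρ, z ^ 2 * h ρ =
      28 * π ^ 2 / 3 / κ ^ 7 := by
    have : Set.EqOn (fun ρ => 2 * π * ρ * ∫ z in Set.Ioo (-ρ) ρ, z ^ 2 * h ρ)
        (fun ρ => 4 * π / 3 * Q ρ) (Set.Ioi 0) := by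
      intro ρ hρ
      simp only
      rw [integral_mul_const, hsq ρ hρ, hhQ ρ hρ]
      ring
    rw [setIntegral_congr_fun measurableSet_Ioi this, integral_const_mul, hQv]
    ring
  rw [← hfin, ← key]
  simp [hh, EuclideanSpace.inner_single_left]


/-- The exchange integral `(13|31)` between the 1s and 2p₃ Slater orbitals. -/
theorem exchange_1s_2p (Z₁ Z₃ : ℝ) (hZ₁ : 0 < Z₁) (hZ₃ : 0 < Z₃)
    (φ1 φ3 : EuclideanSpace ℝ (Fin 3) → ℝ)
    (hφ1 : ∀ x, φ1 x = Z₁ ^ ((3:ℝ)/2) / Real.sqrt Real.pi * Real.exp (-Z₁ * ‖x‖))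
    (hφ3 : ∀ x, φ3 x = Z₃ ^ ((5:ℝ)/2) / Real.sqrt (32 * Real.pi) * x 2 *
      Real.exp (-Z₃ * ‖x‖ / 2)) :
    ∫ x : EuclideanSpace ℝ (Fin 3), ∫ y : EuclideanSpace ℝ (Fin 3),
        (φ1 x * φ3 x) * (φ3 y * φ1 y) / ‖x - y‖
      = 112 * Z₁ ^ 3 * Z₃ ^ 5 / (3 * (2 * Z₁ + Z₃) ^ 7) := by
  set κ := Z₁ + Z₃ / 2 with hκd
  have hκ : 0 < κ := by positivity
  set C := Z₁ ^ ((3 : ℝ) / 2) / √π * (Z₃ ^ ((5 : ℝ) / 2) / √(32 * π)) with hCd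
  have hC : C ^ 2 = Z₁ ^ 3 * Z₃ ^ 5 / (32 * π ^ 2) := by
    have h1 : (Z₁ ^ ((3 : ℝ) / 2)) ^ 2 = Z₁ ^ 3 := by
      rw [← rpow_natCast, ← rpow_mul hZ₁.le]
      norm_num
    have h3 : (Z₃ ^ ((5 : ℝ) / 2)) ^ 2 = Z₃ ^ 5 := by
      rw [← rpow_natCast, ← rpow_mul hZ₃.le]
      norm_num
    rw [hCd, mul_pow, div_pow, div_pow, h1, h3, sq_sqrt pi_pos.le, sq_sqrt (by positivity)]
    field_simp
  have hprod : ∀ x, φ1 x * φ3 x = C * (x 2 * exp (-(κ * ‖x‖))) := by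
    intro x
    have : exp (-(κ * ‖x‖)) = exp (-Z₁ * ‖x‖) * exp (-Z₃ * ‖x‖ / 2) := by
      rw [← exp_add, hκd]
      ring_nf
    rw [hφ1, hφ3, this, hCd]
    ring
  have hinner : ∀ x ≠ 0, ∫ y, (φ1 x * φ3 x) * (φ3 y * φ1 y) / ‖x - y‖ =
      C ^ 2 * (x 2 ^ 2 * (exp (-(κ * ‖x‖)) * dipolePotential κ ‖x‖ / ‖x‖)) := by
    intro x hx
    have h1 : ∀ y, (φ1 x * φ3 x) * (φ3 y * φ1 y) / ‖x - y‖ =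
        C * (x 2 * exp (-(κ * ‖x‖))) * C * (y 2 * exp (-(κ * ‖y‖)) / ‖x - y‖) := by
      intro y
      rw [mul_comm (φ3 y), hprod, hprod]
      ring
    simp_rw [h1]
    rw [integral_const_mul, integral_coord_mul_exp_div_norm_sub hκ hx]
    ring
  have hae : ∀ᵐ x : EuclideanSpace ℝ (Fin 3), x ≠ 0 := Measure.ae_ne volume 0
  rw [integral_congr_ae (hae.mono hinner), integral_const_mul,
    integral_coord_sq_mul_dipolePotential hκ, hC, show 2 * Z₁ + Z₃ = 2 * κ by rw [hκd]; ring]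
  field_simp
  norm_num
end

section
/- The self-interaction Coulomb integral of the 2p₃ orbital equals (33|33) = (501/2560) Z₃, the Coulomb integral between 2p₃ and 2p₁ equals (33|44) = (447/2560) Z₃, and their exchange integral equals (34|43) = (27/2560) Z₃. -/
open MeasureTheory Real

theorem setLIntegral_setLIntegral_swap {A A' : Set ℝ} {B B' : ℝ → Set ℝ}
    (hA : MeasurableSet A) (hA' : MeasurableSet A')
    (hS : MeasurableSet {p : ℝ × ℝ | p.1 ∈ A ∧ p.2 ∈ B p.1})
    (hB : ∀ x ∈ A, MeasurableSet (B x)) (hB' : ∀ y ∈ A', MeasurableSet (B' y))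
    (h : ∀ x y, x ∈ A ∧ y ∈ B x ↔ y ∈ A' ∧ x ∈ B' y)
    {G : ℝ × ℝ → ENNReal} (hG : Measurable G) :
    ∫⁻ x in A, ∫⁻ y in B x, G (x, y) = ∫⁻ y in A', ∫⁻ x in B' y, G (x, y) := by
  classical
  set S := {p : ℝ × ℝ | p.1 ∈ A ∧ p.2 ∈ B p.1} with hSdef
  trans ∫⁻ x, ∫⁻ y, S.indicator G (x, y)
  · rw [← lintegral_indicator hA]
    refine lintegral_congr fun x => ?_
    by_cases hx : x ∈ A
    · rw [Set.indicator_of_mem hx, ← lintegral_indicator (hB x hx)]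
      refine lintegral_congr fun y => ?_
      simp [Set.indicator_apply, hSdef, hx]
    · rw [Set.indicator_of_notMem hx]
      simp [hSdef, hx]
  · rw [lintegral_lintegral_swap (by exact (hG.indicator hS).aemeasurable),
      ← lintegral_indicator hA']
    refine lintegral_congr fun y => ?_
    by_cases hy : y ∈ A'
    · rw [Set.indicator_of_mem hy, ← lintegral_indicator (hB' y hy)]
      refine lintegral_congr fun x => ?_
      simp [Set.indicator_apply, hSdef, h, hy]
    · rw [Set.indicator_of_notMem hy]
      simp [hSdef, h, hy]

theorem lintegral_mul_sqrt_sq_add_sq (z : ℝ) (f : ℝ → ENNReal) :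
    ∫⁻ s in Set.Ioi 0, ENNReal.ofReal s * f (√(s ^ 2 + z ^ 2)) =
      ∫⁻ ρ in Set.Ioi |z|, ENNReal.ofReal ρ * f ρ := by
  have himg : (fun s : ℝ => √(s ^ 2 + z ^ 2)) '' Set.Ioi 0 = Set.Ioi |z| := by
    ext ρ
    simp only [Set.mem_image, Set.mem_Ioi]
    constructor
    · rintro ⟨s, hs, rfl⟩
      exact Real.lt_sqrt_of_sq_lt (by rw [sq_abs]; nlinarith [sq_pos_of_pos hs])
    · intro h
      have h0 : 0 < ρ := (abs_nonneg z).trans_lt h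
      have h1 : z ^ 2 < ρ ^ 2 := by rw [← sq_abs z]; gcongr
      refine ⟨√(ρ ^ 2 - z ^ 2), Real.sqrt_pos.2 (by linarith), ?_⟩
      rw [Real.sq_sqrt (by linarith), sub_add_cancel, Real.sqrt_sq h0.le]
  rw [← himg, lintegral_image_eq_lintegral_abs_deriv_mul (f' := fun s => s / √(s ^ 2 + z ^ 2))
    measurableSet_Ioi]
  · refine setLIntegral_congr_fun measurableSet_Ioi fun s hs => ?_
    have hs : 0 < s := hs
    have : 0 < √(s ^ 2 + z ^ 2) := Real.sqrt_pos.2 (by positivity)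
    rw [← mul_assoc, abs_of_nonneg (by positivity), ← ENNReal.ofReal_mul (by positivity),
      div_mul_cancel₀ _ this.ne']
  · intro s hs
    have hs : 0 < s := hs
    have := (((hasDerivAt_pow 2 s).add_const (z ^ 2)).sqrt (by positivity)).hasDerivWithinAt
      (s := Set.Ioi 0)
    refine this.congr_deriv ?_
    rw [← mul_div_mul_left s _ (two_ne_zero (α := ℝ))]
    simp
  · intro s hs t ht hst
    have hs : 0 < s := hs
    have ht : 0 < t := ht
    have := (Real.sqrt_inj (by positivity) (by positivity)).1 hst
    exact (sq_eq_sq₀ hs.le ht.le).1 (by linarith)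

theorem lintegral_sqrt_sq_add_sq {f : ℝ → ENNReal} (hf : Measurable f) :
    ∫⁻ p : ℝ × ℝ, f (√(p.1 ^ 2 + p.2 ^ 2)) =
      ENNReal.ofReal (2 * π) * ∫⁻ s in Set.Ioi 0, ENNReal.ofReal s * f s := by
  rw [← lintegral_comp_polarCoord_symm, polarCoord_target, Measure.volume_eq_prod,
    ← Measure.prod_restrict, lintegral_prod _ (by
      refine Measurable.aemeasurable ?_
      refine (ENNReal.measurable_ofReal.comp measurable_fst).smul (hf.comp ?_)
      simp only [polarCoord_symm_apply]
      fun_prop), ← lintegral_const_mul _ (by fun_prop)]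
  refine setLIntegral_congr_fun measurableSet_Ioi fun s hs => ?_
  have hs : 0 < s := hs
  have : ∀ θ : ℝ, √((s * cos θ) ^ 2 + (s * sin θ) ^ 2) = s := fun θ => by
    rw [show (s * cos θ) ^ 2 + (s * sin θ) ^ 2 = s ^ 2 * (cos θ ^ 2 + sin θ ^ 2) by ring,
      Real.cos_sq_add_sin_sq, mul_one, Real.sqrt_sq hs.le]
  simp only [polarCoord_symm_apply, this, lintegral_const, smul_eq_mul]
  simp only [MeasurableSet.univ, Measure.restrict_apply, Set.univ_inter, Real.volume_Ioo]
  rw [mul_comm, sub_neg_eq_add, two_mul]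

/-- Integration of an axially symmetric function, in terms of distance and height. -/
theorem lintegral_norm_height {f : ℝ × ℝ → ENNReal} (hf : Measurable f) :
    ∫⁻ y : EuclideanSpace ℝ (Fin 3), f (‖y‖, y 2) =
      ∫⁻ ρ in Set.Ioi (0 : ℝ), ∫⁻ z in Set.Ioo (-ρ) ρ, ENNReal.ofReal (2 * π * ρ) * f (ρ, z) := by
  have h1 : ∫⁻ y : EuclideanSpace ℝ (Fin 3), f (‖y‖, y 2) =
      ∫⁻ z : ℝ, ∫⁻ p : ℝ × ℝ, f (√((√(p.1 ^ 2 + p.2 ^ 2)) ^ 2 + z ^ 2), z) := by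
    have e1 := (PiLp.volume_preserving_toLp (Fin 3)).symm (MeasurableEquiv.toLp 2 _)
    have e2 := volume_preserving_piFinSuccAbove (fun _ : Fin 3 => ℝ) 2
    have e3 := (MeasurePreserving.id (volume : Measure ℝ)).prod (volume_preserving_finTwoArrow ℝ)
    have e := e3.comp (e2.comp e1)
    rw [← lintegral_prod (fun q : ℝ × ℝ × ℝ =>
      f (√((√(q.2.1 ^ 2 + q.2.2 ^ 2)) ^ 2 + q.1 ^ 2), q.1)) (by fun_prop),
      ← e.lintegral_comp (by fun_prop)]
    refine lintegral_congr fun y => ?_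
    change f (‖y‖, y 2) = f (√((√(y 0 ^ 2 + y 1 ^ 2)) ^ 2 + y 2 ^ 2), y 2)
    rw [Real.sq_sqrt (by positivity), EuclideanSpace.norm_eq]
    simp [Fin.sum_univ_three]
  have h2 (z : ℝ) : ∫⁻ p : ℝ × ℝ, f (√((√(p.1 ^ 2 + p.2 ^ 2)) ^ 2 + z ^ 2), z) =
      ∫⁻ ρ in Set.Ioi |z|, ENNReal.ofReal (2 * π * ρ) * f (ρ, z) := by
    rw [lintegral_sqrt_sq_add_sq (f := fun s => f (√(s ^ 2 + z ^ 2), z)) (by fun_prop),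
      lintegral_mul_sqrt_sq_add_sq z (fun ρ => f (ρ, z)), ← lintegral_const_mul _ (by fun_prop)]
    simp_rw [← mul_assoc, ← ENNReal.ofReal_mul Real.two_pi_pos.le]
  simp_rw [h1, h2]
  rw [← setLIntegral_univ]
  refine setLIntegral_setLIntegral_swap (G := fun q => ENNReal.ofReal (2 * π * q.2) * f (q.2, q.1))
    MeasurableSet.univ measurableSet_Ioi ?_ (fun _ _ => measurableSet_Ioi)
    (fun _ _ => measurableSet_Ioo) ?_ (by fun_prop)
  · simpa using measurableSet_lt (by fun_prop : Measurable fun p : ℝ × ℝ => |p.1|) measurable_snd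
  · intro x y
    simp only [Set.mem_univ, true_and, Set.mem_Ioi, Set.mem_Ioo, ← abs_lt]
    exact ⟨fun h => ⟨(abs_nonneg x).trans_lt h, h⟩, fun h => h.2⟩

open scoped RealInnerProductSpace in
theorem lintegral_norm_inner (x : EuclideanSpace ℝ (Fin 3)) {f : ℝ × ℝ → ENNReal}
    (hf : Measurable f) :
    ∫⁻ y : EuclideanSpace ℝ (Fin 3), f (‖y‖, ⟪x, y⟫) =
      ∫⁻ ρ in Set.Ioi (0 : ℝ), ∫⁻ z in Set.Ioo (-ρ) ρ,
        ENNReal.ofReal (2 * π * ρ) * f (ρ, ‖x‖ * z) := by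
  have hn : ‖EuclideanSpace.single (2 : Fin 3) ‖x‖‖ = ‖x‖ := by simp
  have hR := Submodule.reflection_sub hn
  set R := (ℝ ∙ (EuclideanSpace.single (2 : Fin 3) ‖x‖ - x))ᗮ.reflection
  rw [← lintegral_norm_height (f := fun p => f (p.1, ‖x‖ * p.2)) (by fun_prop),
    ← R.measurePreserving.lintegral_comp (by fun_prop)]
  refine lintegral_congr fun y => ?_
  rw [R.norm_map]
  congr 2
  conv_lhs => rw [← hR]
  rw [R.inner_map_map, EuclideanSpace.inner_single_left]
  simp
theorem lintegral_Ioi_sum_mul_exp_neg {n : ℕ} {c : Fin n → ℝ} (hc : ∀ k, 0 ≤ c k) {Z : ℝ}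
    (hZ : 0 < Z) :
    ∫⁻ t in Set.Ioi (0 : ℝ), ENNReal.ofReal ((∑ k, c k * t ^ (k : ℕ)) * exp (-Z * t)) =
      ENNReal.ofReal (∑ k, c k * ((k : ℕ).factorial / Z ^ ((k : ℕ) + 1))) := by
  have hmom (k : ℕ) : ∫⁻ t in Set.Ioi (0 : ℝ), ENNReal.ofReal (t ^ k * exp (-Z * t)) =
      ENNReal.ofReal (k.factorial / Z ^ (k + 1)) := by
    have hint : IntegrableOn (fun t : ℝ => t ^ k * exp (-Z * t)) (Set.Ioi 0) := by
      have := integrableOn_rpow_mul_exp_neg_mul_rpow (s := k) (p := 1) (b := Z)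
        (by have := k.cast_nonneg (α := ℝ); linarith) one_pos hZ
      simpa using this
    rw [← ofReal_integral_eq_lintegral_ofReal hint]
    · congr 1
      have := integral_rpow_mul_exp_neg_mul_Ioi (a := k + 1) (by positivity) hZ
      rw [Real.Gamma_nat_eq_factorial] at this
      simp only [add_sub_cancel_right, Real.rpow_natCast] at this
      simp only [neg_mul, this]
      rw [← Nat.cast_add_one, Real.rpow_natCast, one_div, inv_pow]
      ring
    · filter_upwards [ae_restrict_mem measurableSet_Ioi] with t ht
      have ht : 0 < t := ht
      positivity
  have : ∀ t ∈ Set.Ioi (0 : ℝ), ENNReal.ofReal ((∑ k, c k * t ^ (k : ℕ)) * exp (-Z * t)) =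
      ∑ k, ENNReal.ofReal (c k) * ENNReal.ofReal (t ^ (k : ℕ) * exp (-Z * t)) := by
    intro t ht
    have ht : 0 < t := ht
    rw [Finset.sum_mul, ENNReal.ofReal_sum_of_nonneg]
    · refine Finset.sum_congr rfl fun k _ => ?_
      rw [mul_assoc, ENNReal.ofReal_mul (hc k)]
    · intro k _
      have := hc k
      positivity
  rw [setLIntegral_congr_fun measurableSet_Ioi this, lintegral_finsetSum _ (by fun_prop),
    ENNReal.ofReal_sum_of_nonneg]
  · refine Finset.sum_congr rfl fun k _ => ?_
    rw [lintegral_const_mul _ (by fun_prop), hmom, ENNReal.ofReal_mul (hc k)]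
  · intro k _
    have := hc k
    positivity

theorem setLIntegral_Ioi_comp_add_left (r : ℝ) {f : ℝ → ENNReal} (hf : Measurable f) :
    ∫⁻ ρ in Set.Ioi r, f ρ = ∫⁻ t in Set.Ioi (0 : ℝ), f (r + t) := by
  rw [← (measurePreserving_add_left volume r).setLIntegral_comp_preimage measurableSet_Ioi hf]
  simp

theorem lintegral_Ioi_lintegral_Ioi_of_symm {H : ℝ × ℝ → ENNReal} (hH : Measurable H)
    (hs : ∀ r ρ, H (r, ρ) = H (ρ, r)) :
    ∫⁻ r in Set.Ioi (0 : ℝ), ∫⁻ ρ in Set.Ioi (0 : ℝ), H (r, ρ) =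
      2 * ∫⁻ r in Set.Ioi (0 : ℝ), ∫⁻ ρ in Set.Ioi r, H (r, ρ) := by
  have hsplit : ∀ r ∈ Set.Ioi (0 : ℝ), ∫⁻ ρ in Set.Ioi (0 : ℝ), H (r, ρ) =
      (∫⁻ ρ in Set.Ioc 0 r, H (r, ρ)) + ∫⁻ ρ in Set.Ioi r, H (r, ρ) := by
    intro r hr
    rw [← lintegral_union measurableSet_Ioi Set.Ioc_disjoint_Ioi_same,
      Set.Ioc_union_Ioi_eq_Ioi (le_of_lt hr)]
  have hmeas : Measurable fun r : ℝ => ∫⁻ ρ in Set.Ioi r, H (r, ρ) := by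
    have : (fun r : ℝ => ∫⁻ ρ in Set.Ioi r, H (r, ρ)) =
        fun r => ∫⁻ ρ, {p : ℝ × ℝ | p.1 < p.2}.indicator H (r, ρ) := by
      ext r
      rw [← lintegral_indicator measurableSet_Ioi]
      rfl
    rw [this]
    exact (hH.indicator (measurableSet_lt measurable_fst measurable_snd)).lintegral_prod_right'
  have hswap : ∫⁻ r in Set.Ioi (0 : ℝ), ∫⁻ ρ in Set.Ioc 0 r, H (r, ρ) =
      ∫⁻ r in Set.Ioi (0 : ℝ), ∫⁻ ρ in Set.Ioi r, H (r, ρ) := by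
    rw [setLIntegral_setLIntegral_swap (A' := Set.Ioi 0) (B' := Set.Ici)
      measurableSet_Ioi measurableSet_Ioi ?_
      (fun _ _ => measurableSet_Ioc) (fun _ _ => measurableSet_Ici) ?_ hH]
    · simp_rw [restrict_Ioi_eq_restrict_Ici, hs]
    · have h1 : MeasurableSet {p : ℝ × ℝ | 0 < p.1} :=
        measurableSet_lt measurable_const measurable_fst
      have h2 : MeasurableSet {p : ℝ × ℝ | 0 < p.2} :=
        measurableSet_lt measurable_const measurable_snd
      have h3 : MeasurableSet {p : ℝ × ℝ | p.2 ≤ p.1} :=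
        measurableSet_le measurable_snd measurable_fst
      exact h1.inter (h2.inter h3)
    · intro x y
      simp only [Set.mem_Ioi, Set.mem_Ioc, Set.mem_Ici]
      exact ⟨fun h => ⟨h.2.1, h.2.2⟩, fun h => ⟨h.1.trans_le h.2, h.1, h.2⟩⟩
  rw [setLIntegral_congr_fun measurableSet_Ioi hsplit, lintegral_add_right _ hmeas, hswap, two_mul]

/-- Multipole expansion of a monopole-quadrupole density on a sphere of radius `ρ`,
in the height variable. -/
theorem integral_div_sqrt_height {r ρ : ℝ} (hr : 0 < r) (hρ : 0 < ρ) (hne : r ≠ ρ) (a b : ℝ) :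
    IntervalIntegrable (fun z => (a * ρ ^ 2 + b * z ^ 2) / √(r ^ 2 + ρ ^ 2 - 2 * (r * z)))
      volume (-ρ) ρ ∧
    ∫ z in (-ρ)..ρ, (a * ρ ^ 2 + b * z ^ 2) / √(r ^ 2 + ρ ^ 2 - 2 * (r * z)) =
      ρ ^ 3 * ((2 * a + 2 / 3 * b) / max r ρ + 4 / 15 * b * min r ρ ^ 2 / max r ρ ^ 3) := by
  have hpos : ∀ z ∈ Set.uIcc (-ρ) ρ, 0 < r ^ 2 + ρ ^ 2 - 2 * (r * z) := by
    intro z hz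
    rw [Set.uIcc_of_le (by linarith)] at hz
    have : 0 < (r - ρ) ^ 2 := sq_pos_of_ne_zero (sub_ne_zero.2 hne)
    nlinarith [mul_le_mul_of_nonneg_left hz.2 hr.le]
  have hcont : ContinuousOn
      (fun z => (a * ρ ^ 2 + b * z ^ 2) / √(r ^ 2 + ρ ^ 2 - 2 * (r * z))) (Set.uIcc (-ρ) ρ) :=
    ContinuousOn.div (by fun_prop) (by fun_prop) fun z hz => (Real.sqrt_pos.2 (hpos z hz)).ne'
  refine ⟨hcont.intervalIntegrable, ?_⟩
  set P : ℝ → ℝ := fun t => -(a * ρ ^ 2 * t / r) -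
    b / (4 * r ^ 3) * ((r ^ 2 + ρ ^ 2) ^ 2 * t - 2 / 3 * (r ^ 2 + ρ ^ 2) * t ^ 3 + t ^ 5 / 5)
    with hP
  have hderiv : ∀ z ∈ Set.uIcc (-ρ) ρ,
      HasDerivAt (fun z => P (√(r ^ 2 + ρ ^ 2 - 2 * (r * z))))
        ((a * ρ ^ 2 + b * z ^ 2) / √(r ^ 2 + ρ ^ 2 - 2 * (r * z))) z := by
    intro z hz
    have h1 : HasDerivAt (fun z : ℝ => √(r ^ 2 + ρ ^ 2 - 2 * (r * z)))
        (-(2 * (r * 1)) / (2 * √(r ^ 2 + ρ ^ 2 - 2 * (r * z)))) z :=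
      ((((hasDerivAt_id z).const_mul r).const_mul 2).const_sub _).sqrt (hpos z hz).ne'
    have ht := Real.sqrt_pos.2 (hpos z hz)
    have hsq := Real.sq_sqrt (hpos z hz).le
    set t := √(r ^ 2 + ρ ^ 2 - 2 * (r * z))
    have h2 : HasDerivAt P (-(a * ρ ^ 2 * 1 / r) - b / (4 * r ^ 3) *
        ((r ^ 2 + ρ ^ 2) ^ 2 * 1 - 2 / 3 * (r ^ 2 + ρ ^ 2) * (((3 : ℕ) : ℝ) * t ^ 2 * 1)
          + (((5 : ℕ) : ℝ) * t ^ 4 * 1) / 5)) t :=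
      (((hasDerivAt_id t).const_mul _).div_const r).neg.sub
        (((((hasDerivAt_id t).const_mul _).sub (((hasDerivAt_id t).pow 3).const_mul _)).add
          (((hasDerivAt_id t).pow 5).div_const 5)).const_mul _)
    refine (h2.comp z h1).congr_deriv ?_
    have hz' : z = (r ^ 2 + ρ ^ 2 - t ^ 2) / (2 * r) := by
      rw [hsq]; field_simp; ring
    rw [hz']
    field_simp
    push_cast
    ring
  rw [intervalIntegral.integral_eq_sub_of_hasDerivAt hderiv hcont.intervalIntegrable]
  rw [show r ^ 2 + ρ ^ 2 - 2 * (r * ρ) = (r - ρ) ^ 2 by ring,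
    show r ^ 2 + ρ ^ 2 - 2 * (r * -ρ) = (r + ρ) ^ 2 by ring, Real.sqrt_sq_eq_abs,
    Real.sqrt_sq (by positivity)]
  rcases lt_or_gt_of_ne hne with h | h
  · rw [abs_of_neg (by linarith), max_eq_right h.le, min_eq_left h.le]
    simp only [hP]
    field_simp
    ring
  · rw [abs_of_pos (by linarith), max_eq_left h.le, min_eq_right h.le]
    simp only [hP]
    field_simp
    ring

theorem lintegral_div_sqrt_height {r ρ : ℝ} (hr : 0 < r) (hρ : 0 < ρ) (hne : r ≠ ρ) {a b : ℝ}
    (ha : 0 ≤ a) (hb : 0 ≤ b) :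
    ∫⁻ z in Set.Ioo (-ρ) ρ,
      ENNReal.ofReal ((a * ρ ^ 2 + b * z ^ 2) / √(r ^ 2 + ρ ^ 2 - 2 * (r * z))) =
      ENNReal.ofReal (ρ ^ 3 *
        ((2 * a + 2 / 3 * b) / max r ρ + 4 / 15 * b * min r ρ ^ 2 / max r ρ ^ 3)) := by
  obtain ⟨hi, hv⟩ := integral_div_sqrt_height hr hρ hne a b
  rw [← hv, intervalIntegral.integral_of_le (by linarith), restrict_Ioo_eq_restrict_Ioc,
    ofReal_integral_eq_lintegral_ofReal]
  · exact (intervalIntegrable_iff_integrableOn_Ioc_of_le (by linarith)).1 hi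
  · exact Filter.Eventually.of_forall fun z => by positivity

theorem lintegral_norm {S : ℝ → ENNReal} (hS : Measurable S) :
    ∫⁻ x : EuclideanSpace ℝ (Fin 3), S ‖x‖ =
      ∫⁻ r in Set.Ioi (0 : ℝ), ENNReal.ofReal (4 * π * r ^ 2) * S r := by
  rw [lintegral_norm_height (f := fun p => S p.1) (by fun_prop)]
  refine setLIntegral_congr_fun measurableSet_Ioi fun r hr => ?_
  have hr : 0 < r := hr
  simp only [lintegral_const, MeasurableSet.univ, Measure.restrict_apply, Set.univ_inter,
    Real.volume_Ioo]
  rw [mul_right_comm, ← ENNReal.ofReal_mul (by positivity)]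
  congr 2
  ring
theorem lintegral_radial_multipole {Z : ℝ} (hZ : 0 < Z) {a b : ℝ} (ha : 0 ≤ a) (hb : 0 ≤ b) :
    ∫⁻ r in Set.Ioi (0 : ℝ), ∫⁻ ρ in Set.Ioi (0 : ℝ),
      ENNReal.ofReal (8 * π ^ 2 * (r ^ 4 * ρ ^ 4) * (exp (-Z * r) * exp (-Z * ρ)) *
        ((2 * a + 2 / 3 * b) / max r ρ + 4 / 15 * b * min r ρ ^ 2 / max r ρ ^ 3)) =
      ENNReal.ofReal (π ^ 2 / Z ^ 9 * (1674 * a + 666 * b)) := by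
  rw [lintegral_Ioi_lintegral_Ioi_of_symm (H := fun p => ENNReal.ofReal
    (8 * π ^ 2 * (p.1 ^ 4 * p.2 ^ 4) * (exp (-Z * p.1) * exp (-Z * p.2)) *
        ((2 * a + 2 / 3 * b) / max p.1 p.2 + 4 / 15 * b * min p.1 p.2 ^ 2 / max p.1 p.2 ^ 3)))
    (by fun_prop) (fun r ρ => by
      simp only [max_comm r ρ, min_comm r ρ]; congr 1; ring)]
  set A := 8 * π ^ 2 * (2 * a + 2 / 3 * b) with hA
  set B := 8 * π ^ 2 * (4 / 15 * b) with hB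
  have hA0 : 0 ≤ A := by positivity
  have hB0 : 0 ≤ B := by positivity
  have hinner : ∀ r ∈ Set.Ioi (0 : ℝ), (∫⁻ ρ in Set.Ioi r,
      ENNReal.ofReal (8 * π ^ 2 * (r ^ 4 * ρ ^ 4) * (exp (-Z * r) * exp (-Z * ρ)) *
        ((2 * a + 2 / 3 * b) / max r ρ + 4 / 15 * b * min r ρ ^ 2 / max r ρ ^ 3))) =
      ENNReal.ofReal ((∑ k : Fin 8, ![0, 0, 0, 0, 6 * A / Z ^ 4, 6 * A / Z ^ 3,
        3 * A / Z ^ 2 + B / Z ^ 2, A / Z + B / Z] k * r ^ (k : ℕ)) * exp (-(2 * Z) * r)) := by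
    intro r hr
    have hr : 0 < r := hr
    rw [setLIntegral_Ioi_comp_add_left r (by fun_prop)]
    set e := exp (-(2 * Z) * r) with he
    have he' : exp (-Z * r) * exp (-Z * r) = e := by rw [he, ← Real.exp_add]; ring_nf
    have hc : ∀ k, 0 ≤ (![e * (A * r ^ 7 + B * r ^ 7), e * (3 * A * r ^ 6 + B * r ^ 6),
        e * (3 * A * r ^ 5), e * (A * r ^ 4)] : Fin 4 → ℝ) k := by
      have : 0 < e := Real.exp_pos _
      intro k
      fin_cases k <;> simp <;> positivity
    trans ENNReal.ofReal (∑ k : Fin 4, ![e * (A * r ^ 7 + B * r ^ 7),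
      e * (3 * A * r ^ 6 + B * r ^ 6), e * (3 * A * r ^ 5), e * (A * r ^ 4)] k *
        ((k : ℕ).factorial / Z ^ ((k : ℕ) + 1)))
    · rw [← lintegral_Ioi_sum_mul_exp_neg hc hZ]
      refine setLIntegral_congr_fun measurableSet_Ioi fun t ht => ?_
      have ht : 0 < t := ht
      rw [max_eq_right (by linarith), min_eq_left (by linarith), mul_add (-Z), Real.exp_add,
        ← mul_assoc (exp (-Z * r)), he']
      congr 1
      simp only [Fin.sum_univ_four, hA, hB]
      simp
      field_simp
      ring
    · congr 1
      simp only [Fin.sum_univ_eight, Fin.sum_univ_four]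
      simp [Nat.factorial]
      field_simp
      ring
  rw [setLIntegral_congr_fun measurableSet_Ioi hinner, lintegral_Ioi_sum_mul_exp_neg _
    (by positivity), show (2 : ENNReal) = ENNReal.ofReal 2 by simp,
    ← ENNReal.ofReal_mul (by norm_num)]
  · congr 1
    simp only [Fin.sum_univ_eight, hA, hB]
    simp [Nat.factorial]
    field_simp
    ring
  · intro k
    fin_cases k <;> simp <;> positivity

open scoped RealInnerProductSpace in
theorem lintegral_coulomb {Z : ℝ} (hZ : 0 < Z) {a b : ℝ} (ha : 0 ≤ a) (hb : 0 ≤ b) :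
    ∫⁻ x : EuclideanSpace ℝ (Fin 3), ∫⁻ y : EuclideanSpace ℝ (Fin 3),
      ENNReal.ofReal ((a * (‖x‖ ^ 2 * ‖y‖ ^ 2) + b * ⟪x, y⟫ ^ 2) *
        (exp (-Z * ‖x‖) * exp (-Z * ‖y‖)) / ‖x - y‖) =
      ENNReal.ofReal (π ^ 2 / Z ^ 9 * (1674 * a + 666 * b)) := by
  set S : ℝ → ENNReal := fun r => ∫⁻ ρ in Set.Ioi (0 : ℝ), ENNReal.ofReal
    (2 * π * (r ^ 2 * ρ ^ 4) * (exp (-Z * r) * exp (-Z * ρ)) *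
        ((2 * a + 2 / 3 * b) / max r ρ + 4 / 15 * b * min r ρ ^ 2 / max r ρ ^ 3)) with hS
  have hSm : Measurable S := Measurable.lintegral_prod_right' (f := fun p : ℝ × ℝ => ENNReal.ofReal
    (2 * π * (p.1 ^ 2 * p.2 ^ 4) * (exp (-Z * p.1) * exp (-Z * p.2)) *
        ((2 * a + 2 / 3 * b) / max p.1 p.2 + 4 / 15 * b * min p.1 p.2 ^ 2 / max p.1 p.2 ^ 3)))
    (by fun_prop)
  trans ∫⁻ x : EuclideanSpace ℝ (Fin 3), S ‖x‖
  · refine lintegral_congr fun x => ?_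
    obtain rfl | hx := eq_or_ne x 0
    · simp [hS]
    have hr : 0 < ‖x‖ := norm_pos_iff.2 hx
    have h1 (y : EuclideanSpace ℝ (Fin 3)) :
        ‖x - y‖ = √(‖x‖ ^ 2 + ‖y‖ ^ 2 - 2 * ⟪x, y⟫) := by
      rw [← Real.sqrt_sq (norm_nonneg (x - y)), norm_sub_sq_real]
      ring_nf
    simp_rw [h1]
    rw [lintegral_norm_inner x (f := fun p => ENNReal.ofReal
      ((a * (‖x‖ ^ 2 * p.1 ^ 2) + b * p.2 ^ 2) * (exp (-Z * ‖x‖) * exp (-Z * p.1)) /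
        √(‖x‖ ^ 2 + p.1 ^ 2 - 2 * p.2))) (by fun_prop)]
    refine lintegral_congr_ae ?_
    have hne : ∀ᵐ ρ : ℝ ∂volume.restrict (Set.Ioi 0), ρ ≠ ‖x‖ :=
      ae_restrict_of_ae (Measure.ae_ne volume _)
    filter_upwards [ae_restrict_mem measurableSet_Ioi, hne] with ρ hρ hne
    have hρ : 0 < ρ := hρ
    have h2 (z : ℝ) : ENNReal.ofReal (2 * π * ρ) * ENNReal.ofReal
        ((a * (‖x‖ ^ 2 * ρ ^ 2) + b * (‖x‖ * z) ^ 2) * (exp (-Z * ‖x‖) * exp (-Z * ρ)) /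
          √(‖x‖ ^ 2 + ρ ^ 2 - 2 * (‖x‖ * z))) =
        ENNReal.ofReal (2 * π * ρ * ‖x‖ ^ 2 * (exp (-Z * ‖x‖) * exp (-Z * ρ))) *
          ENNReal.ofReal ((a * ρ ^ 2 + b * z ^ 2) / √(‖x‖ ^ 2 + ρ ^ 2 - 2 * (‖x‖ * z))) := by
      rw [← ENNReal.ofReal_mul (by positivity), ← ENNReal.ofReal_mul (by positivity)]
      congr 1
      ring
    simp_rw [h2]
    rw [lintegral_const_mul _ (by fun_prop), lintegral_div_sqrt_height hr hρ hne.symm ha hb,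
      ← ENNReal.ofReal_mul (by positivity)]
    congr 1
    ring
  · rw [lintegral_norm hSm, ← lintegral_radial_multipole hZ ha hb]
    refine setLIntegral_congr_fun measurableSet_Ioi fun r _ => ?_
    simp only [hS]
    rw [← lintegral_const_mul _ (by fun_prop)]
    refine lintegral_congr fun ρ => ?_
    rw [← ENNReal.ofReal_mul (by positivity)]
    congr 1
    ring
noncomputable def coulombKernel (Z : ℝ)
    (p : EuclideanSpace ℝ (Fin 3) × EuclideanSpace ℝ (Fin 3)) : ℝ :=
  exp (-Z * ‖p.1‖) * exp (-Z * ‖p.2‖) / ‖p.1 - p.2‖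

theorem coulombKernel_nonneg (Z : ℝ) (p : EuclideanSpace ℝ (Fin 3) × EuclideanSpace ℝ (Fin 3)) :
    0 ≤ coulombKernel Z p := by
  unfold coulombKernel
  positivity

theorem measurable_coulombKernel (Z : ℝ) : Measurable (coulombKernel Z) := by
  unfold coulombKernel
  fun_prop

theorem coulombKernel_map (Z : ℝ) (R : EuclideanSpace ℝ (Fin 3) ≃ₗᵢ[ℝ] EuclideanSpace ℝ (Fin 3))
    (p : EuclideanSpace ℝ (Fin 3) × EuclideanSpace ℝ (Fin 3)) :
    coulombKernel Z (R p.1, R p.2) = coulombKernel Z p := by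
  simp only [coulombKernel, ← map_sub, R.norm_map]

/-- The Coulomb integral of the densities `xᵢ xⱼ exp (-Z |x|)` and `yₖ yₗ exp (-Z |y|)`. -/
noncomputable def coulombMoment (Z : ℝ) (i j k l : Fin 3) : ℝ :=
  ∫ p : EuclideanSpace ℝ (Fin 3) × EuclideanSpace ℝ (Fin 3),
    p.1 i * p.1 j * (p.2 k * p.2 l) * coulombKernel Z p

open scoped RealInnerProductSpace in
theorem integral_quadratic_mul_coulombKernel {Z : ℝ} (hZ : 0 < Z) {a b : ℝ} (ha : 0 ≤ a)
    (hb : 0 ≤ b) :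
    Integrable (fun p : EuclideanSpace ℝ (Fin 3) × EuclideanSpace ℝ (Fin 3) =>
      (a * (‖p.1‖ ^ 2 * ‖p.2‖ ^ 2) + b * ⟪p.1, p.2⟫ ^ 2) * coulombKernel Z p) ∧
    ∫ p : EuclideanSpace ℝ (Fin 3) × EuclideanSpace ℝ (Fin 3),
      (a * (‖p.1‖ ^ 2 * ‖p.2‖ ^ 2) + b * ⟪p.1, p.2⟫ ^ 2) * coulombKernel Z p =
      π ^ 2 / Z ^ 9 * (1674 * a + 666 * b) := by
  have hm : Measurable fun p : EuclideanSpace ℝ (Fin 3) × EuclideanSpace ℝ (Fin 3) =>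
      (a * (‖p.1‖ ^ 2 * ‖p.2‖ ^ 2) + b * ⟪p.1, p.2⟫ ^ 2) * coulombKernel Z p := by
    have := measurable_coulombKernel Z
    fun_prop
  have hnn : ∀ p : EuclideanSpace ℝ (Fin 3) × EuclideanSpace ℝ (Fin 3),
      0 ≤ (a * (‖p.1‖ ^ 2 * ‖p.2‖ ^ 2) + b * ⟪p.1, p.2⟫ ^ 2) * coulombKernel Z p := fun p =>
    mul_nonneg (by positivity) (coulombKernel_nonneg Z p)
  have hl : ∫⁻ p : EuclideanSpace ℝ (Fin 3) × EuclideanSpace ℝ (Fin 3), ENNReal.ofReal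
      ((a * (‖p.1‖ ^ 2 * ‖p.2‖ ^ 2) + b * ⟪p.1, p.2⟫ ^ 2) * coulombKernel Z p) =
      ENNReal.ofReal (π ^ 2 / Z ^ 9 * (1674 * a + 666 * b)) := by
    rw [← lintegral_coulomb hZ ha hb, Measure.volume_eq_prod,
      lintegral_prod _ hm.ennreal_ofReal.aemeasurable]
    simp only [coulombKernel, mul_div_assoc]
  constructor
  · refine ⟨hm.aestronglyMeasurable, ?_⟩
    rw [hasFiniteIntegral_iff_ofReal (Filter.Eventually.of_forall hnn), hl]
    exact ENNReal.ofReal_lt_top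
  · rw [integral_eq_lintegral_of_nonneg_ae (Filter.Eventually.of_forall hnn)
      hm.aestronglyMeasurable, hl, ENNReal.toReal_ofReal (by positivity)]

theorem integrable_coulombMoment {Z : ℝ} (hZ : 0 < Z) (i j k l : Fin 3) :
    Integrable fun p : EuclideanSpace ℝ (Fin 3) × EuclideanSpace ℝ (Fin 3) =>
      p.1 i * p.1 j * (p.2 k * p.2 l) * coulombKernel Z p := by
  have hK := measurable_coulombKernel Z
  refine (integral_quadratic_mul_coulombKernel hZ zero_le_one le_rfl).1.mono
    (by fun_prop) (Filter.Eventually.of_forall fun p => ?_)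
  have hx (i : Fin 3) : |p.1 i| ≤ ‖p.1‖ := by simpa using PiLp.norm_apply_le p.1 i
  have hy (i : Fin 3) : |p.2 i| ≤ ‖p.2‖ := by simpa using PiLp.norm_apply_le p.2 i
  rw [one_mul, zero_mul, add_zero, norm_mul, norm_mul _ (coulombKernel Z p)]
  refine mul_le_mul_of_nonneg_right ?_ (norm_nonneg _)
  rw [Real.norm_eq_abs, Real.norm_of_nonneg (by positivity), abs_mul, abs_mul, abs_mul, sq, sq]
  gcongr
  exacts [hx i, hx j, hy k, hy l]

/-- Invariance of the moments under a simultaneous isometry of both variables. -/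
theorem coulombMoment_comp (Z : ℝ) (i j k l : Fin 3)
    (R : EuclideanSpace ℝ (Fin 3) ≃ₗᵢ[ℝ] EuclideanSpace ℝ (Fin 3)) :
    ∫ p : EuclideanSpace ℝ (Fin 3) × EuclideanSpace ℝ (Fin 3),
      R p.1 i * R p.1 j * (R p.2 k * R p.2 l) * coulombKernel Z p = coulombMoment Z i j k l := by
  have := (R.measurePreserving.prod R.measurePreserving).integral_comp
    (R.toHomeomorph.prodCongr R.toHomeomorph).measurableEmbedding
    (fun p => p.1 i * p.1 j * (p.2 k * p.2 l) * coulombKernel Z p)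
  simp only [Prod.map, coulombKernel_map] at this
  exact this

theorem coulombMoment_perm (Z : ℝ) (i j k l : Fin 3) (σ : Equiv.Perm (Fin 3)) :
    coulombMoment Z (σ i) (σ j) (σ k) (σ l) = coulombMoment Z i j k l := by
  rw [← coulombMoment_comp Z i j k l (LinearIsometryEquiv.piLpCongrLeft 2 ℝ ℝ σ.symm)]
  simp [coulombMoment, LinearIsometryEquiv.piLpCongrLeft_apply]

/-- The reflection exchanging the first coordinate axis with the diagonal of the `0,2` plane. -/
noncomputable def diagonalReflection :
    EuclideanSpace ℝ (Fin 3) ≃ₗᵢ[ℝ] EuclideanSpace ℝ (Fin 3) :=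
  LinearIsometry.toLinearIsometryEquiv
    { toFun := fun x => !₂[(x 0 + x 2) / √2, x 1, (x 0 - x 2) / √2]
      map_add' := fun x y => by
        ext i
        fin_cases i <;> simp <;> ring
      map_smul' := fun c x => by
        ext i
        fin_cases i <;> simp <;> ring
      norm_map' := fun x => by
        simp only [LinearMap.coe_mk, AddHom.coe_mk, EuclideanSpace.norm_eq, Fin.sum_univ_three]
        congr 1
        simp [div_pow]
        ring } rfl

theorem diagonalReflection_apply (x : EuclideanSpace ℝ (Fin 3)) :
    diagonalReflection x = !₂[(x 0 + x 2) / √2, x 1, (x 0 - x 2) / √2] := rfl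

theorem exists_perm_apply_eq : ∀ i k : Fin 3, i ≠ k →
    ∃ σ : Equiv.Perm (Fin 3), σ 2 = i ∧ σ 0 = k := by decide

theorem coulombMoment_diag (Z : ℝ) (i : Fin 3) :
    coulombMoment Z i i i i = coulombMoment Z 2 2 2 2 := by
  simpa using coulombMoment_perm Z 2 2 2 2 (Equiv.swap 2 i)

theorem coulombMoment_direct (Z : ℝ) {i k : Fin 3} (h : i ≠ k) :
    coulombMoment Z i i k k = coulombMoment Z 2 2 0 0 := by
  obtain ⟨σ, rfl, rfl⟩ := exists_perm_apply_eq i k h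
  exact coulombMoment_perm Z 2 2 0 0 σ

theorem coulombMoment_exchange (Z : ℝ) {i k : Fin 3} (h : i ≠ k) :
    coulombMoment Z i k i k = coulombMoment Z 2 0 2 0 := by
  obtain ⟨σ, rfl, rfl⟩ := exists_perm_apply_eq i k h
  exact coulombMoment_perm Z 2 0 2 0 σ

theorem coulombMoment_isotropy {Z : ℝ} (hZ : 0 < Z) :
    2 * coulombMoment Z 2 0 2 0 = coulombMoment Z 2 2 2 2 - coulombMoment Z 2 2 0 0 := by
  have hi := integrable_coulombMoment hZ
  have h : coulombMoment Z 2 0 2 0 = ∫ p : EuclideanSpace ℝ (Fin 3) × EuclideanSpace ℝ (Fin 3),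
      (1 / 4 : ℝ) * (((p.1 0 * p.1 0 * (p.2 0 * p.2 0) * coulombKernel Z p -
        p.1 0 * p.1 0 * (p.2 2 * p.2 2) * coulombKernel Z p) -
        p.1 2 * p.1 2 * (p.2 0 * p.2 0) * coulombKernel Z p) +
        p.1 2 * p.1 2 * (p.2 2 * p.2 2) * coulombKernel Z p) := by
    rw [← coulombMoment_comp Z 2 0 2 0 diagonalReflection]
    refine integral_congr_ae (Filter.Eventually.of_forall fun p => ?_)
    simp only [diagonalReflection_apply]
    simp
    have : √2 ^ 2 = 2 := Real.sq_sqrt (by norm_num)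
    have h4 : √2 ^ 4 = 4 := by rw [show √2 ^ 4 = (√2 ^ 2) ^ 2 by ring, this]; norm_num
    field_simp
    rw [h4]
    ring
  rw [integral_const_mul, integral_add (by exact ((hi _ _ _ _).sub (hi _ _ _ _)).sub (hi _ _ _ _))
    (hi _ _ _ _), integral_sub (by exact (hi _ _ _ _).sub (hi _ _ _ _)) (hi _ _ _ _),
    integral_sub (hi _ _ _ _) (hi _ _ _ _)] at h
  simp only [← coulombMoment.eq_1] at h
  rw [coulombMoment_diag Z 0, coulombMoment_direct Z (show (0 : Fin 3) ≠ 2 by decide)] at h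
  linarith

theorem sum_coulombMoment_direct {Z : ℝ} (hZ : 0 < Z) :
    ∑ i, ∑ k, coulombMoment Z i i k k = π ^ 2 / Z ^ 9 * 1674 := by
  have h := (integral_quadratic_mul_coulombKernel hZ zero_le_one le_rfl).2
  rw [mul_one, mul_zero, add_zero] at h
  rw [← h]
  simp_rw [coulombMoment, ← integral_finsetSum Finset.univ
    (fun k _ => integrable_coulombMoment hZ _ _ k k)]
  rw [← integral_finsetSum Finset.univ (fun i _ => integrable_finsetSum Finset.univ
    (fun k _ => integrable_coulombMoment hZ i i k k))]
  refine integral_congr_ae (Filter.Eventually.of_forall fun p => ?_)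
  simp only [EuclideanSpace.real_norm_sq_eq, Fin.sum_univ_three]
  ring

theorem sum_coulombMoment_exchange {Z : ℝ} (hZ : 0 < Z) :
    ∑ i, ∑ k, coulombMoment Z i k i k = π ^ 2 / Z ^ 9 * 666 := by
  have h := (integral_quadratic_mul_coulombKernel hZ le_rfl zero_le_one).2
  rw [mul_one, mul_zero, zero_add] at h
  rw [← h]
  simp_rw [coulombMoment, ← integral_finsetSum Finset.univ
    (fun k _ => integrable_coulombMoment hZ _ k _ k)]
  rw [← integral_finsetSum Finset.univ (fun i _ => integrable_finsetSum Finset.univ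
    (fun k _ => integrable_coulombMoment hZ i k i k))]
  refine integral_congr_ae (Filter.Eventually.of_forall fun p => ?_)
  simp only [PiLp.inner_apply, RCLike.inner_apply, conj_trivial, Fin.sum_univ_three]
  ring

theorem coulombMoment_values {Z : ℝ} (hZ : 0 < Z) :
    coulombMoment Z 2 2 2 2 = π ^ 2 / Z ^ 9 * (1002 / 5) ∧
    coulombMoment Z 2 2 0 0 = π ^ 2 / Z ^ 9 * (894 / 5) ∧
    coulombMoment Z 2 0 2 0 = π ^ 2 / Z ^ 9 * (54 / 5) := by
  have h1 := sum_coulombMoment_direct hZ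
  have h2 := sum_coulombMoment_exchange hZ
  have h3 := coulombMoment_isotropy hZ
  have hd : ∀ i k, coulombMoment Z i i k k =
      if i = k then coulombMoment Z 2 2 2 2 else coulombMoment Z 2 2 0 0 := by
    intro i k
    split_ifs with h
    · rw [h, coulombMoment_diag]
    · exact coulombMoment_direct Z h
  have he : ∀ i k, coulombMoment Z i k i k =
      if i = k then coulombMoment Z 2 2 2 2 else coulombMoment Z 2 0 2 0 := by
    intro i k
    split_ifs with h
    · rw [h, coulombMoment_diag]
    · exact coulombMoment_exchange Z h
  rw [Finset.sum_congr rfl fun i _ => Finset.sum_congr rfl fun k _ => hd i k] at h1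
  rw [Finset.sum_congr rfl fun i _ => Finset.sum_congr rfl fun k _ => he i k] at h2
  simp only [Fin.sum_univ_three] at h1 h2
  simp at h1 h2
  refine ⟨?_, ?_, ?_⟩ <;> linarith

theorem integral_integral_eq_coulombMoment {Z : ℝ} (hZ : 0 < Z) (i j k l : Fin 3) (c : ℝ)
    {F : EuclideanSpace ℝ (Fin 3) → EuclideanSpace ℝ (Fin 3) → ℝ}
    (hF : ∀ x y, F x y = c * (x i * x j * (y k * y l) * coulombKernel Z (x, y))) :
    ∫ x, ∫ y, F x y = c * coulombMoment Z i j k l := by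
  simp_rw [hF, integral_const_mul]
  rw [coulombMoment, Measure.volume_eq_prod, integral_prod _ (integrable_coulombMoment hZ i j k l)]

/-- The Coulomb and exchange integrals among the 2p Slater orbitals:
`(33|33) = (501/2560)Z₃`, `(33|44) = (447/2560)Z₃`, `(34|43) = (27/2560)Z₃`. -/
theorem coulomb_exchange_2p (Z₃ : ℝ) (hZ₃ : 0 < Z₃)
    (φ3 φ4 : EuclideanSpace ℝ (Fin 3) → ℝ)
    (hφ3 : ∀ x, φ3 x = Z₃ ^ ((5:ℝ)/2) / Real.sqrt (32 * Real.pi) * x 2 *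
      Real.exp (-Z₃ * ‖x‖ / 2))
    (hφ4 : ∀ x, φ4 x = Z₃ ^ ((5:ℝ)/2) / Real.sqrt (32 * Real.pi) * x 0 *
      Real.exp (-Z₃ * ‖x‖ / 2)) :
    (∫ x : EuclideanSpace ℝ (Fin 3), ∫ y : EuclideanSpace ℝ (Fin 3),
        (φ3 x) ^ 2 * (φ3 y) ^ 2 / ‖x - y‖) = 501 / 2560 * Z₃ ∧
    (∫ x : EuclideanSpace ℝ (Fin 3), ∫ y : EuclideanSpace ℝ (Fin 3),
        (φ3 x) ^ 2 * (φ4 y) ^ 2 / ‖x - y‖) = 447 / 2560 * Z₃ ∧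
    (∫ x : EuclideanSpace ℝ (Fin 3), ∫ y : EuclideanSpace ℝ (Fin 3),
        (φ3 x * φ4 x) * (φ4 y * φ3 y) / ‖x - y‖) = 27 / 2560 * Z₃ := by
  set c : ℝ := (Z₃ ^ ((5 : ℝ) / 2) / √(32 * π)) ^ 4 with hc
  have hcval : c = Z₃ ^ 10 / (1024 * π ^ 2) := by
    have h1 : (Z₃ ^ ((5 : ℝ) / 2)) ^ 4 = Z₃ ^ 10 := by
      rw [← Real.rpow_natCast, ← Real.rpow_mul hZ₃.le, ← Real.rpow_natCast]
      norm_num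
    have h2 : √(32 * π) ^ 4 = 1024 * π ^ 2 := by
      rw [show √(32 * π) ^ 4 = (√(32 * π) ^ 2) ^ 2 by ring, Real.sq_sqrt (by positivity)]
      ring
    rw [hc, div_pow, h1, h2]
  have hexp (x : EuclideanSpace ℝ (Fin 3)) :
      exp (-Z₃ * ‖x‖) = exp (-Z₃ * ‖x‖ / 2) ^ 2 := by
    rw [← Real.exp_nat_mul]
    congr 1
    push_cast
    ring
  obtain ⟨hA, hB, hC⟩ := coulombMoment_values hZ₃
  refine ⟨?_, ?_, ?_⟩
  · rw [integral_integral_eq_coulombMoment hZ₃ 2 2 2 2 c, hA, hcval]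
    · field_simp
      norm_num
    · intro x y
      simp only [coulombKernel, hφ3, hexp, hc]
      ring
  · rw [integral_integral_eq_coulombMoment hZ₃ 2 2 0 0 c, hB, hcval]
    · field_simp
      norm_num
    · intro x y
      simp only [coulombKernel, hφ3, hφ4, hexp, hc]
      ring
  · rw [integral_integral_eq_coulombMoment hZ₃ 2 0 2 0 c, hC, hcval]
    · field_simp
      norm_num
    · intro x y
      simp only [coulombKernel, hφ3, hφ4, hexp, hc]
      ring
end
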